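/- arXiv:1803.04208 — 9 statements merged into one kernel-verified Lean document; each statement's English description precedes it below -/
import Mathlib

section
/- For every real number k and every point x = (x₁, x₂) ∈ ℝ², the integral of the plane wave over the unit circle equals 2π times the Bessel function of order zero: ∫₀^{2π} exp(i k (x₁ cos t + x₂ sin t)) dt = 2π J₀(k‖x‖). -/
/-!
Writing `x = ‖x‖ (sin a, cos a)`, the phase is `k ‖x‖ sin (t + a)`, and since the integrand is
`2π`-periodic in `t` the shift may be removed, which leaves `∫ exp (i z sin t) dt` with
`z = k ‖x‖`. Expanding the exponential and integrating term by term
(`hasSum_integral_exp_sin`) reduces the claim to the moments of `sin` over a full period: the odd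
ones vanish and the even ones are `2π (2m)! / (4 ^ m (m!)²)`, so that the `2m`-th term of the
exponential series integrates to `2π` times the `m`-th term of the series of `J₀`.
-/

open scoped Real
open RealInnerProductSpace

/-- Bessel function of the first kind of integer order `n`. -/
noncomputable def besselJ (n : ℕ) (z : ℝ) : ℝ :=
  ∑' m : ℕ, (-1 : ℝ) ^ m / (Nat.factorial m * Nat.factorial (m + n)) * (z / 2) ^ (2 * m + n)

/-- Parametrization of the unit circle in ℝ². -/
noncomputable def uc (t : ℝ) : EuclideanSpace ℝ (Fin 2) :=
  (WithLp.equiv 2 (Fin 2 → ℝ)).symm ![Real.cos t, Real.sin t]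

lemma integral_sin_pow_odd_period (m : ℕ) :
    ∫ t in (0:ℝ)..(2 * π), Real.sin t ^ (2 * m + 1) = 0 := by
  induction m with
  | zero => simp
  | succ m ih =>
    rw [show 2 * (m + 1) + 1 = (2 * m + 1) + 2 by ring, integral_sin_pow, ih]
    simp

lemma integral_sin_pow_even_period (m : ℕ) :
    ∫ t in (0:ℝ)..(2 * π), Real.sin t ^ (2 * m)
      = 2 * π * ((2 * m).factorial / (4 ^ m * (m.factorial : ℝ) ^ 2)) := by
  induction m with
  | zero => simp
  | succ m ih =>
    rw [show 2 * (m + 1) = 2 * m + 2 by ring, integral_sin_pow, ih]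
    have hm : (m.factorial : ℝ) ≠ 0 := by positivity
    simp only [Nat.factorial_succ]
    push_cast
    simp only [Real.sin_zero, Real.sin_two_pi, zero_pow (Nat.succ_ne_zero _), zero_mul, sub_zero,
      zero_div, zero_add]
    field_simp
    ring

lemma hasSum_integral_exp_sin (z : ℝ) :
    HasSum (fun n : ℕ => (Complex.I * z) ^ n / n.factorial *
        ((∫ t in (0:ℝ)..(2 * π), Real.sin t ^ n : ℝ) : ℂ))
      (∫ t in (0:ℝ)..(2 * π), Complex.exp (Complex.I * z * (Real.sin t : ℂ))) := by
  have h := intervalIntegral.hasSum_integral_of_dominated_convergence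
    (μ := MeasureTheory.volume) (a := 0) (b := 2 * π)
    (F := fun (n : ℕ) (t : ℝ) => (Complex.I * z * (Real.sin t : ℂ)) ^ n / (n.factorial : ℂ))
    (f := fun t : ℝ => Complex.exp (Complex.I * z * (Real.sin t : ℂ)))
    (fun n _ => |z| ^ n / n.factorial)
    (fun n => by
      apply Continuous.aestronglyMeasurable
      fun_prop)
    (fun n => by
      refine Filter.Eventually.of_forall fun t _ => ?_
      simp only [norm_div, norm_pow, norm_mul, Complex.norm_I, one_mul, Complex.norm_real,
        Real.norm_eq_abs, Complex.norm_natCast]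
      gcongr
      exact mul_le_of_le_one_right (abs_nonneg _) (Real.abs_sin_le_one t))
    (Filter.Eventually.of_forall fun t _ => Real.summable_pow_div_factorial |z|)
    (by simp)
    (Filter.Eventually.of_forall fun t _ => by
      rw [Complex.exp_eq_exp_ℂ]
      exact NormedSpace.expSeries_div_hasSum_exp _)
  convert! h using 2 with n
  rw [← intervalIntegral.integral_ofReal, ← intervalIntegral.integral_const_mul]
  congr 1
  ext t
  push_cast
  ring

lemma integral_exp_sin_eq_bessel (z : ℝ) :
    ∫ t in (0:ℝ)..(2 * π), Complex.exp (Complex.I * z * (Real.sin t : ℂ))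
      = 2 * π * besselJ 0 z := by
  have h := hasSum_integral_exp_sin z
  have hinj : Function.Injective (fun m : ℕ => 2 * m) := fun a b hab => by simpa using hab
  rw [← hinj.hasSum_iff] at h
  · rw [← h.tsum_eq, besselJ, Complex.ofReal_tsum, ← tsum_mul_left]
    congr 1
    ext m
    have hm : (m.factorial : ℂ) ≠ 0 := by exact_mod_cast m.factorial_ne_zero
    have hm2 : ((2 * m).factorial : ℂ) ≠ 0 := by exact_mod_cast (2 * m).factorial_ne_zero
    simp only [Function.comp, integral_sin_pow_even_period]
    push_cast
    rw [mul_pow, pow_mul Complex.I, Complex.I_sq, add_zero, add_zero, div_pow, pow_mul (2 : ℂ)]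
    norm_num
    field_simp
  · intro n hn
    obtain ⟨m, rfl | rfl⟩ := n.even_or_odd'
    · exact absurd ⟨m, rfl⟩ hn
    · rw [integral_sin_pow_odd_period]
      simp

lemma exists_inner_uc_eq_sin (x : EuclideanSpace ℝ (Fin 2)) :
    ∃ a : ℝ, ∀ t, ⟪uc t, x⟫ = ‖x‖ * Real.sin (t + a) := by
  -- `sin (t + a) = sin t * cos a + cos t * sin a`, so `a` is the argument of `x₂ + i x₁`.
  refine ⟨Complex.arg ⟨x 1, x 0⟩, fun t => ?_⟩
  have hn : ‖(⟨x 1, x 0⟩ : ℂ)‖ = ‖x‖ := by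
    rw [Complex.norm_eq_sqrt_sq_add_sq, EuclideanSpace.norm_eq]
    simp [Fin.sum_univ_two, add_comm]
  have h1 := Complex.norm_mul_cos_arg ⟨x 1, x 0⟩
  have h0 := Complex.norm_mul_sin_arg ⟨x 1, x 0⟩
  rw [hn] at h0 h1
  simp only at h0 h1
  have : ⟪uc t, x⟫ = x 0 * Real.cos t + x 1 * Real.sin t := by
    simp [uc, PiLp.inner_apply, Fin.sum_univ_two]
  rw [this, Real.sin_add]
  linear_combination (-Real.cos t) * h0 - Real.sin t * h1

/-- ∫₀^{2π} exp(i k (x₁ cos t + x₂ sin t)) dt = 2π J₀(k‖x‖). -/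
theorem integral_planeWave_eq_bessel (k : ℝ) (x : EuclideanSpace ℝ (Fin 2)) :
    (∫ t in (0:ℝ)..(2*π), Complex.exp (Complex.I * k * (⟪uc t, x⟫ : ℝ)))
      = 2 * π * besselJ 0 (k * ‖x‖) := by
  obtain ⟨a, ha⟩ := exists_inner_uc_eq_sin x
  rw [← integral_exp_sin_eq_bessel]
  set f : ℝ → ℂ := fun t => Complex.exp (Complex.I * (k * ‖x‖ : ℝ) * (Real.sin t : ℂ)) with hf
  have hper : Function.Periodic f (2 * π) := fun t => by simp only [hf, Real.sin_add_two_pi]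
  have hshift : ∀ t, Complex.exp (Complex.I * k * (⟪uc t, x⟫ : ℝ)) = f (t + a) := fun t => by
    rw [ha, hf]
    push_cast
    ring_nf
  simp only [hshift]
  rw [intervalIntegral.integral_comp_add_right f a, zero_add, add_comm (2 * π) a,
    hper.intervalIntegral_add_eq a 0, zero_add]
end

section
/- For every real number k and every point x ∈ ℝ², the equally spaced Riemann sums of the plane wave over the unit circle converge to 2π J₀(k‖x‖): with θ_n = (cos(2πn/N), sin(2πn/N)), one has lim_{N→∞} (2π/N) Σ_{n=1}^{N} exp(i k θ_n · x) = 2π J₀(k‖x‖). -/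
/-!
Identify `x` with the complex number `c = x₀ + i x₁` and put `w = exp (i t)`. Then
`⟪uc t, x⟫ = (c̄ w + c w⁻¹) / 2`, so with `A = i k c̄ / 2` and `B = i k c / 2` the plane wave is
`exp (A w) * exp (B w⁻¹) = ∑ (p, q), A ^ p / p! * B ^ q / q! * w ^ (p - q)`.
Averaging over the `N`-th roots of unity `w` annihilates every term with `p ≠ q` and `p, q < N`
(`average_rootsOfUnity`), so each coefficient of the averaged series is eventually constant in `N`.
The series is dominated by `∑ (p, q), ‖A‖ ^ p / p! * ‖B‖ ^ q / q!`, hence by dominated convergence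
the averages tend to the diagonal sum `∑ p, (A * B) ^ p / (p!) ^ 2`
(`tendsto_average_exp_mul_exp`). As `A * B = -(k ‖x‖ / 2) ^ 2`, this is the series of `J₀`.
-/

open scoped Real
open RealInnerProductSpace

/-- Orthogonality of the characters `w ↦ w ^ p` and `w ↦ w ^ q` on the `N`-th roots of unity. -/
lemma average_rootsOfUnity {N : ℕ} {ζ : ℂ} (hζ : IsPrimitiveRoot ζ N) {p q : ℕ}
    (hp : p < N) (hq : q < N) :
    (1 / N : ℂ) * ∑ n ∈ Finset.Icc 1 N, (ζ ^ n) ^ p * ((ζ ^ n)⁻¹) ^ q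
      = if p = q then 1 else 0 := by
  have hN : N ≠ 0 := by omega
  have hζ0 : ζ ≠ 0 := hζ.ne_zero hN
  have hterm : ∀ n : ℕ, (ζ ^ n) ^ p * ((ζ ^ n)⁻¹) ^ q = (ζ ^ p * (ζ ^ q)⁻¹) ^ n := by
    intro n
    rw [mul_pow, inv_pow, inv_pow, ← pow_mul, ← pow_mul, ← pow_mul, ← pow_mul,
      mul_comm n p, mul_comm n q]
  simp only [hterm]
  split_ifs with h
  · subst h
    have hN' : (N : ℂ) ≠ 0 := by exact_mod_cast hN
    simp [hζ0, hN']
  · set u := ζ ^ p * (ζ ^ q)⁻¹ with hu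
    have hu1 : u - 1 ≠ 0 := by
      intro h1
      have h2 : u = 1 := sub_eq_zero.mp h1
      rw [hu, mul_inv_eq_one₀ (pow_ne_zero _ hζ0)] at h2
      exact h (hζ.pow_inj hp hq h2)
    have huN : u ^ N = 1 := by
      rw [hu, mul_pow, inv_pow, ← pow_mul, ← pow_mul, mul_comm p, mul_comm q, pow_mul, pow_mul,
        hζ.pow_eq_one]
      simp
    have hg : ∑ n ∈ Finset.range N, u ^ n = 0 := by
      have := geom_sum_mul u N
      rw [huN, sub_self] at this
      exact (mul_eq_zero.mp this).resolve_right hu1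
    have hs : ∑ n ∈ Finset.Icc 1 N, u ^ n = u * ∑ n ∈ Finset.range N, u ^ n := by
      rw [← Finset.Ico_add_one_right_eq_Icc, Finset.sum_Ico_eq_sum_range, Finset.mul_sum]
      simp [pow_add]
    rw [hs, hg]
    simp

lemma hasSum_mul_prod {f g : ℕ → ℂ} {s t : ℂ} (hf : HasSum f s) (hg : HasSum g t) :
    HasSum (fun m : ℕ × ℕ => f m.1 * g m.2) (s * t) :=
  hf.mul hg (summable_mul_of_summable_norm hf.summable.norm hg.summable.norm)

lemma hasSum_exp_prod (a b : ℂ) :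
    HasSum (fun m : ℕ × ℕ => a ^ m.1 / (m.1.factorial : ℂ) * (b ^ m.2 / (m.2.factorial : ℂ)))
      (Complex.exp a * Complex.exp b) := by
  have hsum : ∀ c : ℂ, HasSum (fun n : ℕ => c ^ n / n.factorial) (Complex.exp c) := by
    intro c
    rw [Complex.exp_eq_exp_ℂ]
    exact NormedSpace.expSeries_div_hasSum_exp c
  have h := hasSum_mul_prod (hsum a) (hsum b)
  exact h

/-- The averages of `w ↦ exp (A w) * exp (B w⁻¹)` over the `N`-th roots of unity tend to the
constant coefficient of its Laurent series. -/
lemma tendsto_average_exp_mul_exp (A B : ℂ) :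
    Filter.Tendsto (fun N : ℕ => (1 / N : ℂ) * ∑ n ∈ Finset.Icc 1 N,
      Complex.exp (A * Complex.exp (2 * π * Complex.I / N) ^ n) *
        Complex.exp (B * (Complex.exp (2 * π * Complex.I / N) ^ n)⁻¹))
      Filter.atTop (nhds (∑' p : ℕ, (A * B) ^ p / (p.factorial : ℂ) ^ 2)) := by
  set coef : ℕ × ℕ → ℂ := fun m =>
    A ^ m.1 / (m.1.factorial : ℂ) * (B ^ m.2 / (m.2.factorial : ℂ)) with hcoef
  set avg : ℕ → ℕ × ℕ → ℂ := fun N m => (1 / N : ℂ) * ∑ n ∈ Finset.Icc 1 N,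
    (Complex.exp (2 * π * Complex.I / N) ^ n) ^ m.1 *
      ((Complex.exp (2 * π * Complex.I / N) ^ n)⁻¹) ^ m.2 with havg
  have hexpand : ∀ N : ℕ, (1 / N : ℂ) * ∑ n ∈ Finset.Icc 1 N,
      Complex.exp (A * Complex.exp (2 * π * Complex.I / N) ^ n) *
        Complex.exp (B * (Complex.exp (2 * π * Complex.I / N) ^ n)⁻¹)
      = ∑' m, coef m * avg N m := by
    intro N
    refine (HasSum.tsum_eq ?_).symm
    have h := (hasSum_sum (s := Finset.Icc 1 N) fun n _ => hasSum_exp_prod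
      (A * Complex.exp (2 * π * Complex.I / N) ^ n)
      (B * (Complex.exp (2 * π * Complex.I / N) ^ n)⁻¹)).mul_left (1 / N : ℂ)
    refine h.congr_fun ?_
    intro m
    simp only [hcoef, havg, Finset.mul_sum]
    refine Finset.sum_congr rfl fun n _ => ?_
    rw [mul_pow, mul_pow]
    ring
  have hdiag : ∑' p : ℕ, (A * B) ^ p / (p.factorial : ℂ) ^ 2
      = ∑' m : ℕ × ℕ, coef m * (if m.1 = m.2 then 1 else 0) := by
    have hinj : Function.Injective (fun p : ℕ => (p, p)) := fun a b h => (Prod.ext_iff.mp h).1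
    rw [← hinj.tsum_eq (f := fun m : ℕ × ℕ => coef m * (if m.1 = m.2 then 1 else 0))]
    · refine tsum_congr fun p => ?_
      simp only [hcoef, if_true, mul_pow]
      ring
    · rintro ⟨p, q⟩ h
      by_cases hpq : p = q
      · exact ⟨p, by simp [hpq]⟩
      · simp [hpq] at h
  have hnorm : ∀ N n : ℕ, ‖Complex.exp (2 * π * Complex.I / N) ^ n‖ = 1 := by
    intro N n
    have : (2 * π * Complex.I / N : ℂ) = ((2 * π / N : ℝ) : ℂ) * Complex.I := by
      push_cast; ring
    rw [norm_pow, this, Complex.norm_exp_ofReal_mul_I, one_pow]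
  have havg_le : ∀ N m, ‖avg N m‖ ≤ 1 := by
    intro N m
    have h1 : ‖∑ n ∈ Finset.Icc 1 N, (Complex.exp (2 * π * Complex.I / N) ^ n) ^ m.1 *
      ((Complex.exp (2 * π * Complex.I / N) ^ n)⁻¹) ^ m.2‖ ≤ N := by
      refine (norm_sum_le _ _).trans (le_of_eq ?_)
      simp only [norm_mul, norm_pow _ m.1, norm_pow _ m.2, norm_inv, hnorm]
      simp
    simp only [havg, norm_mul, norm_div, norm_one, Complex.norm_natCast]
    rw [one_div_mul_eq_div]
    exact div_le_one_of_le₀ h1 (Nat.cast_nonneg N)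
  simp only [hexpand, hdiag]
  refine tendsto_tsum_of_dominated_convergence (bound := fun m => ‖coef m‖)
    (hasSum_exp_prod A B).summable.norm ?_ ?_
  · intro m
    refine tendsto_const_nhds.congr' ?_
    filter_upwards [Filter.eventually_gt_atTop m.1, Filter.eventually_gt_atTop m.2] with N h1 h2
    rw [← average_rootsOfUnity (Complex.isPrimitiveRoot_exp N (by omega)) h1 h2]
  · refine Filter.Eventually.of_forall fun N m => ?_
    rw [norm_mul]
    exact mul_le_of_le_one_right (norm_nonneg _) (havg_le N m)

/-- the equally spaced Riemann sums of the plane wave over the unit circle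
converge to 2π J₀(k‖x‖). -/
theorem tendsto_riemannSum_planeWave (k : ℝ) (x : EuclideanSpace ℝ (Fin 2)) :
    Filter.Tendsto (fun N : ℕ =>
      (2 * π / N : ℂ) * ∑ n ∈ Finset.Icc 1 N,
        Complex.exp (Complex.I * k * (⟪uc (2 * π * n / N), x⟫ : ℝ)))
      Filter.atTop (nhds (2 * π * besselJ 0 (k * ‖x‖))) := by
  set A : ℂ := Complex.I * k * (x 0 - x 1 * Complex.I) / 2 with hA
  set B : ℂ := Complex.I * k * (x 0 + x 1 * Complex.I) / 2 with hB
  have hAB : A * B = ((-(k * ‖x‖ / 2) ^ 2 : ℝ) : ℂ) := by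
    have hx : ‖x‖ ^ 2 = x 0 ^ 2 + x 1 ^ 2 := by
      rw [EuclideanSpace.real_norm_sq_eq, Fin.sum_univ_two]
    rw [div_pow, mul_pow, hx, hA, hB]
    push_cast
    linear_combination
      (k ^ 2 / 4 * (x 0 ^ 2 + x 1 ^ 2 * (1 - Complex.I ^ 2)) : ℂ) * Complex.I_sq
  have hlim : (∑' p : ℕ, (A * B) ^ p / (p.factorial : ℂ) ^ 2) = (besselJ 0 (k * ‖x‖) : ℂ) := by
    rw [besselJ, Complex.ofReal_tsum]
    refine tsum_congr fun p => ?_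
    rw [hAB, neg_pow]
    push_cast
    rw [add_zero, add_zero, pow_mul]
    generalize (k * ‖x‖ / 2 : ℂ) = z
    ring
  rw [← hlim]
  refine ((tendsto_average_exp_mul_exp A B).const_mul (2 * π : ℂ)).congr fun N => ?_
  rw [← mul_assoc, mul_one_div]
  congr 1
  refine Finset.sum_congr rfl fun n _ => ?_
  have hw : Complex.exp (2 * π * Complex.I / N) ^ n
      = Complex.exp ((2 * π * n / N : ℝ) * Complex.I) := by
    rw [← Complex.exp_nat_mul]
    push_cast
    ring_nf
  rw [hw, ← Complex.exp_neg, ← Complex.exp_add]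
  congr 1
  generalize 2 * π * n / N = t
  have hinner : (⟪uc t, x⟫ : ℝ) = Real.cos t * x 0 + Real.sin t * x 1 := by
    simp [uc, PiLp.inner_apply, Fin.sum_univ_two, mul_comm]
  rw [hinner, ← neg_mul, Complex.exp_mul_I, Complex.exp_mul_I, Complex.cos_neg, Complex.sin_neg,
    hA, hB]
  push_cast
  linear_combination (-Complex.I * k * x 1 * Complex.sin t) * Complex.I_sq
end

section
/- Let k > 0, let φ ∈ ℝ² be a unit vector, and let x ∈ ℝ² with x ≠ 0. Then ∫₀^{2π} (φ · θ(t)) exp(i k θ(t) · x) dt = 2π i ((x/‖x‖) · φ) J₁(k‖x‖). -/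
/-!
Rotating the parameter by the argument of `x` (the integrand is `2π`-periodic) turns the phase
`k θ(t) · x` into `z cos t` with `z = k‖x‖`, and `φ · θ(t)` into `A cos t + B sin t` with
`A = (x/‖x‖) · φ`. Expanding the exponential and integrating term by term, the `sin` part
contributes nothing, since `sin t cosⁿ t` is an exact derivative, and the `cos` part leaves the
Wallis integrals `∫₀^{2π} cos^{n+1} t dt`. These vanish for even `n`, and for `n = 2m + 1`
they are `2π (2m+2)! / (4^{m+1} (m+1)!²)`, which produces the power series of `2π i A J₁(z)`.
-/

open scoped Real
open RealInnerProductSpace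

lemma integral_cos_pow_odd_circle (m : ℕ) :
    ∫ t in (0:ℝ)..(2*π), Real.cos t ^ (2 * m + 1) = 0 := by
  induction m with
  | zero => simp
  | succ m ih =>
    rw [show 2 * (m + 1) + 1 = (2 * m + 1) + 2 by ring, integral_cos_pow, ih]
    simp

/-- The Wallis integral over a full period. -/
lemma integral_cos_pow_even_circle (m : ℕ) :
    ∫ t in (0:ℝ)..(2*π), Real.cos t ^ (2 * m)
      = 2 * π * (Nat.factorial (2 * m)) / (4 ^ m * (Nat.factorial m) ^ 2) := by
  induction m with
  | zero => simp
  | succ m ih =>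
    have h : (Nat.factorial m : ℝ) ≠ 0 := by positivity
    rw [show 2 * (m + 1) = 2 * m + 2 by ring, integral_cos_pow, ih]
    simp only [Nat.factorial_succ, Real.sin_two_pi, Real.sin_zero]
    push_cast
    field_simp
    ring

lemma integral_sin_mul_cos_pow_circle (n : ℕ) :
    ∫ t in (0:ℝ)..(2*π), Real.sin t * Real.cos t ^ n = 0 := by
  have h := @integral_sin_pow_odd_mul_cos_pow 0 (2*π) 0 n
  simpa using h

/-- The `n`-th term of the termwise integration, in its real form. -/
lemma integral_linear_mul_cos_pow (A B : ℝ) (n : ℕ) :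
    ∫ t in (0:ℝ)..(2*π), (A * Real.cos t + B * Real.sin t) * Real.cos t ^ n
      = A * ∫ t in (0:ℝ)..(2*π), Real.cos t ^ (n + 1) := by
  have h : ∀ t : ℝ, (A * Real.cos t + B * Real.sin t) * Real.cos t ^ n
      = A * Real.cos t ^ (n + 1) + B * (Real.sin t * Real.cos t ^ n) := fun t => by ring
  simp_rw [h]
  rw [intervalIntegral.integral_add (Continuous.intervalIntegrable (by fun_prop) _ _)
    (Continuous.intervalIntegrable (by fun_prop) _ _), intervalIntegral.integral_const_mul,
    intervalIntegral.integral_const_mul, integral_sin_mul_cos_pow_circle]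
  simp

/-- Expansion of the rotated integral, before the Wallis integrals are evaluated. -/
lemma hasSum_rotated_integral (A B z : ℝ) :
    HasSum (fun n : ℕ => (Complex.I * z) ^ n / (Nat.factorial n) *
        ((A * ∫ t in (0:ℝ)..(2*π), Real.cos t ^ (n + 1) : ℝ) : ℂ))
      (∫ t in (0:ℝ)..(2*π), ((A * Real.cos t + B * Real.sin t : ℝ) : ℂ) *
        Complex.exp (Complex.I * z * (Real.cos t : ℝ))) := by
  have key := intervalIntegral.hasSum_integral_of_dominated_convergence (a := 0) (b := 2 * π)
    (μ := MeasureTheory.volume)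
    (F := fun (n : ℕ) (t : ℝ) => (Complex.I * z) ^ n / (Nat.factorial n) *
      (((A * Real.cos t + B * Real.sin t) * Real.cos t ^ n : ℝ) : ℂ))
    (f := fun t => ((A * Real.cos t + B * Real.sin t : ℝ) : ℂ) *
        Complex.exp (Complex.I * z * (Real.cos t : ℝ)))
    (fun n _ => |z| ^ n / (Nat.factorial n) * (|A| + |B|)) ?_ ?_ ?_ ?_ ?_
  · simp_rw [intervalIntegral.integral_const_mul, intervalIntegral.integral_ofReal,
      integral_linear_mul_cos_pow] at key
    exact key
  · intro n
    exact Continuous.aestronglyMeasurable (by fun_prop)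
  · intro n
    refine Filter.Eventually.of_forall fun t _ => ?_
    rw [norm_mul, norm_div, norm_pow, norm_mul, Complex.norm_I, one_mul, Complex.norm_real,
      Complex.norm_natCast, Complex.norm_real, Real.norm_eq_abs, Real.norm_eq_abs]
    gcongr
    rw [abs_mul, abs_pow]
    have h1 : |A * Real.cos t + B * Real.sin t| ≤ |A| + |B| := by
      refine (abs_add_le _ _).trans ?_
      rw [abs_mul, abs_mul]
      gcongr
      · exact mul_le_of_le_one_right (abs_nonneg _) (Real.abs_cos_le_one t)
      · exact mul_le_of_le_one_right (abs_nonneg _) (Real.abs_sin_le_one t)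
    have h2 : |Real.cos t| ^ n ≤ 1 := pow_le_one₀ (abs_nonneg _) (Real.abs_cos_le_one t)
    exact (mul_le_of_le_one_right (abs_nonneg _) h2).trans h1
  · exact Filter.Eventually.of_forall fun t _ =>
      (Real.summable_pow_div_factorial |z|).mul_right _
  · exact intervalIntegrable_const
  · refine Filter.Eventually.of_forall fun t _ => ?_
    have h := (NormedSpace.expSeries_div_hasSum_exp (𝔸 := ℂ)
      (Complex.I * z * (Real.cos t : ℝ))).mul_left
        ((A * Real.cos t + B * Real.sin t : ℝ) : ℂ)
    rw [← Complex.exp_eq_exp_ℂ] at h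
    have e : ∀ n : ℕ, ((A * Real.cos t + B * Real.sin t : ℝ) : ℂ) *
        ((Complex.I * z * (Real.cos t : ℝ)) ^ n / (Nat.factorial n)) =
        (Complex.I * z) ^ n / (Nat.factorial n) *
          (((A * Real.cos t + B * Real.sin t) * Real.cos t ^ n : ℝ) : ℂ) := fun n => by
      push_cast
      ring
    simp_rw [e] at h
    exact h

lemma integral_rotated_eq (A B z : ℝ) :
    ∫ t in (0:ℝ)..(2*π), ((A * Real.cos t + B * Real.sin t : ℝ) : ℂ) *
        Complex.exp (Complex.I * z * (Real.cos t : ℝ))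
      = 2 * π * Complex.I * A * besselJ 1 z := by
  have h := hasSum_rotated_integral A B z
  have hinj : Function.Injective fun m : ℕ => 2 * m + 1 := fun a b hab => by
    simpa using hab
  -- Only the odd indices contribute.
  rw [← hinj.hasSum_iff] at h
  · rw [← h.tsum_eq, besselJ, Complex.ofReal_tsum, ← tsum_mul_left]
    refine tsum_congr fun m => ?_
    simp only [Function.comp_apply]
    rw [show 2 * m + 1 + 1 = 2 * (m + 1) by ring, integral_cos_pow_even_circle,
      show 2 * (m + 1) = (2 * m + 1) + 1 by ring, Nat.factorial_succ (2 * m + 1),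
      Nat.factorial_succ m, mul_pow, pow_succ Complex.I, pow_mul Complex.I, Complex.I_sq]
    have h1 : (Nat.factorial m : ℂ) ≠ 0 := by exact_mod_cast Nat.factorial_ne_zero m
    have h2 : (Nat.factorial (2 * m + 1) : ℂ) ≠ 0 := by
      exact_mod_cast Nat.factorial_ne_zero (2 * m + 1)
    have h3 : (m : ℂ) + 1 ≠ 0 := by exact_mod_cast Nat.succ_ne_zero m
    have h4 : (4 : ℂ) ^ m = 2 ^ (2 * m) := by rw [pow_mul]; norm_num
    push_cast
    rw [pow_succ (4 : ℂ), h4, div_pow, pow_succ (2 : ℂ) (2 * m)]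
    field_simp
    ring
  · intro n hn
    obtain ⟨m, rfl | rfl⟩ := n.even_or_odd'
    · rw [integral_cos_pow_odd_circle]
      simp
    · exact absurd ⟨m, rfl⟩ hn

/-- ∫₀^{2π} (φ · θ(t)) exp(i k θ(t) · x) dt = 2π i ((x/‖x‖) · φ) J₁(k‖x‖). -/
theorem integral_dot_planeWave_eq_besselOne (k : ℝ) (hk : 0 < k)
    (φ x : EuclideanSpace ℝ (Fin 2)) (hφ : ‖φ‖ = 1) (hx : x ≠ 0) :
    (∫ t in (0:ℝ)..(2*π),
        ((⟪φ, uc t⟫ : ℝ) : ℂ) * Complex.exp (Complex.I * k * (⟪uc t, x⟫ : ℝ)))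
      = 2 * π * Complex.I * ((⟪‖x‖⁻¹ • x, φ⟫ : ℝ) : ℂ) * besselJ 1 (k * ‖x‖) := by
  have hr : ‖x‖ ≠ 0 := norm_ne_zero_iff.mpr hx
  -- Polar coordinates `x = ‖x‖ (cos a, sin a)`.
  obtain ⟨a, h0, h1⟩ : ∃ a : ℝ, x 0 = ‖x‖ * Real.cos a ∧ x 1 = ‖x‖ * Real.sin a := by
    refine ⟨Complex.arg ⟨x 0, x 1⟩, ?_, ?_⟩
    all_goals
      have hn : ‖x‖ = ‖(⟨x 0, x 1⟩ : ℂ)‖ := by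
        rw [EuclideanSpace.norm_eq, Complex.norm_eq_sqrt_sq_add_sq]
        simp [Fin.sum_univ_two]
      rw [hn]
    · rw [Complex.norm_mul_cos_arg]
    · rw [Complex.norm_mul_sin_arg]
  have hA : (⟪‖x‖⁻¹ • x, φ⟫ : ℝ) = φ 0 * Real.cos a + φ 1 * Real.sin a := by
    rw [real_inner_smul_left]
    simp only [PiLp.inner_apply, Fin.sum_univ_two, RCLike.inner_apply, conj_trivial, h0, h1]
    field_simp
  set f : ℝ → ℂ := fun t =>
    ((⟪φ, uc t⟫ : ℝ) : ℂ) * Complex.exp (Complex.I * k * (⟪uc t, x⟫ : ℝ)) with hf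
  have hper : Function.Periodic f (2 * π) := fun t => by simp [hf, uc]
  have hshift : ∀ t, f (t + a) =
      (((φ 0 * Real.cos a + φ 1 * Real.sin a) * Real.cos t
        + (φ 1 * Real.cos a - φ 0 * Real.sin a) * Real.sin t : ℝ) : ℂ) *
        Complex.exp (Complex.I * ((k * ‖x‖ : ℝ) : ℂ) * (Real.cos t : ℝ)) := fun t => by
    have e1 : (⟪φ, uc (t + a)⟫ : ℝ) = (φ 0 * Real.cos a + φ 1 * Real.sin a) * Real.cos t
        + (φ 1 * Real.cos a - φ 0 * Real.sin a) * Real.sin t := by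
      simp [PiLp.inner_apply, Fin.sum_univ_two, uc, Real.cos_add, Real.sin_add]
      ring
    have e2 : (⟪uc (t + a), x⟫ : ℝ) = ‖x‖ * Real.cos t := by
      simp only [PiLp.inner_apply, Fin.sum_univ_two, RCLike.inner_apply, conj_trivial, h0, h1]
      simp [uc, Real.cos_add, Real.sin_add]
      linear_combination (‖x‖ * Real.cos t) * Real.sin_sq_add_cos_sq a
    simp only [hf]
    rw [e1, e2]
    push_cast
    ring_nf
  have hrot : ∫ t in (0:ℝ)..(2*π), f t = ∫ t in (0:ℝ)..(2*π), f (t + a) := by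
    rw [intervalIntegral.integral_comp_add_right, zero_add, add_comm (2 * π) a,
      ← hper.intervalIntegral_add_eq 0 a, zero_add]
  rw [hrot, hA, intervalIntegral.integral_congr fun t _ => hshift t, integral_rotated_eq]
end

section
/- Let k > 0, let φ ∈ ℝ² be a unit vector, and let x ∈ ℝ² with x ≠ 0. With θ_n = (cos(2πn/N), sin(2πn/N)), the equally spaced Riemann sums converge: lim_{N→∞} (2π/N) Σ_{n=1}^{N} (φ · θ_n) exp(i k θ_n · x) = 2π i ((x/‖x‖) · φ) J₁(k‖x‖). -/
/-!
Write `W = exp (i t)` and identify `ℝ²` with `ℂ`. With `u = φ₀ - i φ₁`, `v = x₀ - i x₁`,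
the summand is `(u W + ū W⁻¹) / 2 * exp (a W + b W⁻¹)`, where `a = i k v / 2`, `b = i k v̄ / 2`.
Expanding `exp (a W) * exp (b W⁻¹)` as a double power series reduces the claim to the averages of
the characters `W ^ j` over the `N`-th roots of unity. Such an average is `1` if `N ∣ j` and `0`
otherwise, hence for fixed `j` it is eventually `1` if `j = 0` and `0` if not
(`tendsto_average_character`). Dominated convergence for series
(`tendsto_average_laurent`) leaves only the terms with `p - q = ±1`, where `p`, `q` are the exponents of
`W`, `W⁻¹`. They sum to the Bessel series because
`a b = -(k ‖x‖ / 2)²` and `u b + ū a = i k ⟪φ, x⟫`. No integral is needed.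
-/

open scoped Real
open RealInnerProductSpace

open Filter Topology

/-- The `n`-th of the `N` equally spaced points on the unit circle of `ℂ`. -/
noncomputable def circlePoint (N n : ℕ) : ℂ := Complex.exp ((2 * π * n / N : ℝ) * Complex.I)

lemma circlePoint_ne_zero (N n : ℕ) : circlePoint N n ≠ 0 := Complex.exp_ne_zero _

lemma norm_circlePoint (N n : ℕ) : ‖circlePoint N n‖ = 1 := Complex.norm_exp_ofReal_mul_I _

/-- The mean of the character `w ↦ w ^ j` over the `N`-th roots of unity. -/
noncomputable def averageCharacter (N : ℕ) (j : ℤ) : ℂ :=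
  (1 / N : ℂ) * ∑ n ∈ Finset.Icc 1 N, circlePoint N n ^ j

lemma norm_averageCharacter_le (N : ℕ) (j : ℤ) : ‖averageCharacter N j‖ ≤ 1 := by
  rw [averageCharacter, norm_mul]
  have h : ‖∑ n ∈ Finset.Icc 1 N, circlePoint N n ^ j‖ ≤ N := by
    refine (norm_sum_le _ _).trans ?_
    simp [norm_zpow, norm_circlePoint]
  rcases Nat.eq_zero_or_pos N with rfl | hN
  · simp
  have hN' : (0 : ℝ) < N := by exact_mod_cast hN
  calc ‖(1 / N : ℂ)‖ * _ ≤ (1 / N : ℝ) * N := by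
        rw [norm_div, norm_one, Complex.norm_natCast]; gcongr
    _ = 1 := by field_simp

/-- For `N > |j|` the mean over the roots of unity already equals its limit: `ζ ^ j = 1` for
`ζ = exp (2 π i / N)` forces `N ∣ j`, and otherwise the geometric sum vanishes. -/
lemma averageCharacter_eq {N : ℕ} {j : ℤ} (h : |j| < N) :
    averageCharacter N j = if j = 0 then 1 else 0 := by
  have hN : N ≠ 0 := by rintro rfl; simp at h; exact absurd h (abs_nonneg j).not_gt
  have hNC : (N : ℂ) ≠ 0 := by exact_mod_cast hN
  split_ifs with hj
  · subst hj
    simp [averageCharacter, hNC]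
  have hζ := Complex.isPrimitiveRoot_exp N hN
  set ζ := Complex.exp (2 * π * Complex.I / N) with hζdef
  have hne : ζ ^ j ≠ 1 := by
    rw [Ne, hζ.zpow_eq_one_iff_dvd]
    exact fun hd => hj (Int.eq_zero_of_abs_lt_dvd hd h)
  have hpt : ∀ n, circlePoint N n ^ j = (ζ ^ j) ^ n := by
    intro n
    have : circlePoint N n = ζ ^ n := by
      rw [circlePoint, hζdef, ← Complex.exp_nat_mul]
      congr 1
      push_cast
      ring
    rw [this, ← zpow_natCast, ← zpow_natCast, ← zpow_mul, ← zpow_mul, mul_comm]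
  have hpow : (ζ ^ j) ^ N = 1 := by
    rw [← zpow_natCast, ← zpow_mul, mul_comm, zpow_mul, zpow_natCast, hζ.pow_eq_one, one_zpow]
  have hsum : ∑ n ∈ Finset.Icc 1 N, (ζ ^ j) ^ n = 0 := by
    have hI : Finset.Icc 1 N = Finset.Ico 1 (N + 1) := by ext; simp
    rw [hI, geom_sum_Ico hne (by omega), pow_succ, hpow]
    simp
  simp only [averageCharacter, hpt, hsum, mul_zero]

lemma tendsto_average_character (j : ℤ) :
    Tendsto (fun N => averageCharacter N j) atTop (𝓝 (if j = 0 then 1 else 0)) := by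
  refine tendsto_const_nhds.congr' ?_
  filter_upwards [eventually_gt_atTop j.natAbs] with N hN
  exact (averageCharacter_eq (by rw [Int.abs_eq_natAbs]; exact_mod_cast hN)).symm

/-- The coefficient of `W ^ (p - q)` in `exp (a W) * exp (b W⁻¹)` contributed by the pair
`(p, q)`. -/
noncomputable def laurentCoeff (a b : ℂ) (p : ℕ × ℕ) : ℂ :=
  a ^ p.1 / p.1.factorial * (b ^ p.2 / p.2.factorial)

lemma summable_norm_laurentCoeff (a b : ℂ) : Summable fun p => ‖laurentCoeff a b p‖ := by
  have h := Summable.mul_norm (NormedSpace.norm_expSeries_div_summable a)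
    (NormedSpace.norm_expSeries_div_summable b)
  exact h

lemma hasSum_laurent (a b : ℂ) {w : ℂ} (hw : w ≠ 0) :
    HasSum (fun p : ℕ × ℕ => laurentCoeff a b p * w ^ ((p.1 : ℤ) - p.2))
      (Complex.exp (a * w + b * w⁻¹)) := by
  have h := (summable_norm_laurentCoeff (a * w) (b * w⁻¹)).of_norm.hasSum
  have ht : ∑' p, laurentCoeff (a * w) (b * w⁻¹) p = Complex.exp (a * w + b * w⁻¹) := by
    rw [Complex.exp_add, Complex.exp_eq_exp_ℂ, NormedSpace.exp_eq_tsum_div]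
    exact (tsum_mul_tsum_of_summable_norm (NormedSpace.norm_expSeries_div_summable (a * w))
      (NormedSpace.norm_expSeries_div_summable (b * w⁻¹))).symm
  rw [ht] at h
  refine h.congr_fun ?_
  intro p
  simp only [laurentCoeff, zpow_sub₀ hw, zpow_natCast, mul_pow, inv_pow]
  field_simp

/-- Only the terms with `p - q + j = 0` of the double series survive averaging in the limit. -/
lemma tendsto_average_laurent (a b : ℂ) (j : ℤ) :
    Tendsto (fun N : ℕ => (1 / N : ℂ) * ∑ n ∈ Finset.Icc 1 N,
        circlePoint N n ^ j * Complex.exp (a * circlePoint N n + b * (circlePoint N n)⁻¹))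
      atTop
      (𝓝 (∑' p : ℕ × ℕ, laurentCoeff a b p * if (p.1 : ℤ) - p.2 + j = 0 then 1 else 0)) := by
  have key : ∀ N : ℕ, (1 / N : ℂ) * ∑ n ∈ Finset.Icc 1 N,
        circlePoint N n ^ j * Complex.exp (a * circlePoint N n + b * (circlePoint N n)⁻¹)
      = ∑' p : ℕ × ℕ, laurentCoeff a b p * averageCharacter N ((p.1 : ℤ) - p.2 + j) := by
    intro N
    have h := (hasSum_sum (s := Finset.Icc 1 N) fun n _ =>
      (hasSum_laurent a b (circlePoint_ne_zero N n)).mul_left (circlePoint N n ^ j)).mul_left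
        (1 / N : ℂ)
    rw [← h.tsum_eq]
    congr 1
    ext p
    simp only [averageCharacter, Finset.mul_sum]
    refine Finset.sum_congr rfl fun n _ => ?_
    rw [zpow_add₀ (circlePoint_ne_zero N n)]
    ring
  simp only [key]
  refine tendsto_tsum_of_dominated_convergence (summable_norm_laurentCoeff a b)
    (fun p => (tendsto_average_character _).const_mul _) (Eventually.of_forall fun N p => ?_)
  rw [norm_mul]
  exact mul_le_of_le_one_right (norm_nonneg _) (norm_averageCharacter_le _ _)

/-- The series `∑ c ^ m / (m! (m + 1)!)`, through which `J₁` enters. -/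
noncomputable def diagSeries (c : ℂ) : ℂ :=
  ∑' m : ℕ, c ^ m / (m.factorial * (m + 1).factorial)

lemma tsum_laurent_one (a b : ℂ) :
    ∑' p : ℕ × ℕ, (laurentCoeff a b p * if (p.1 : ℤ) - p.2 + 1 = 0 then 1 else 0)
      = b * diagSeries (a * b) := by
  have hinj : Function.Injective fun m : ℕ => (m, m + 1) := fun m n h => (Prod.ext_iff.1 h).1
  rw [← hinj.tsum_eq, diagSeries, ← tsum_mul_left]
  · refine tsum_congr fun m => ?_
    rw [if_pos (by push_cast; ring), laurentCoeff, mul_pow, pow_succ]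
    ring
  · rintro ⟨p, q⟩ h
    by_cases hpq : (p : ℤ) - q + 1 = 0
    · exact ⟨p, by ext <;> simp; omega⟩
    · simp [hpq] at h

lemma tsum_laurent_neg_one (a b : ℂ) :
    ∑' p : ℕ × ℕ, (laurentCoeff a b p * if (p.1 : ℤ) - p.2 + -1 = 0 then 1 else 0)
      = a * diagSeries (a * b) := by
  rw [mul_comm a b, ← tsum_laurent_one b a, ← (Equiv.prodComm ℕ ℕ).tsum_eq]
  refine tsum_congr fun p => ?_
  simp only [laurentCoeff, Equiv.prodComm_apply, Prod.fst_swap, Prod.snd_swap]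
  rw [mul_comm (a ^ _ / _)]
  congr 1
  exact if_congr (by omega) rfl rfl

lemma besselJ_one (z : ℝ) :
    (besselJ 1 z : ℂ) = z / 2 * diagSeries (-((z : ℂ) / 2) ^ 2) := by
  rw [besselJ, Complex.ofReal_tsum, diagSeries, ← tsum_mul_left]
  refine tsum_congr fun m => ?_
  push_cast
  rw [neg_pow (((z : ℂ) / 2) ^ 2), ← pow_mul, pow_succ]
  ring

/-- The inner product with a point of the circle, in complex form. -/
lemma inner_uc (y : EuclideanSpace ℝ (Fin 2)) (N n : ℕ) :
    ((⟪y, uc (2 * π * n / N)⟫ : ℝ) : ℂ) =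
      ((y 0 - y 1 * Complex.I) * circlePoint N n
        + (y 0 + y 1 * Complex.I) * (circlePoint N n)⁻¹) / 2 := by
  rw [circlePoint, ← Complex.exp_neg, ← neg_mul, ← Complex.ofReal_neg, Complex.exp_mul_I,
    Complex.exp_mul_I]
  simp only [uc, PiLp.inner_apply, Fin.sum_univ_two]
  simp
  linear_combination (y 1 * Complex.sin (2 * π * n / N)) * Complex.I_sq

/-- the equally spaced Riemann sums of (φ·θ) exp(i k θ·x) converge to
2π i ((x/‖x‖)·φ) J₁(k‖x‖). -/
theorem tendsto_riemannSum_dot_planeWave (k : ℝ) (hk : 0 < k)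
    (φ x : EuclideanSpace ℝ (Fin 2)) (hφ : ‖φ‖ = 1) (hx : x ≠ 0) :
    Filter.Tendsto (fun N : ℕ =>
      (2 * π / N : ℂ) * ∑ n ∈ Finset.Icc 1 N,
        ((⟪φ, uc (2 * π * n / N)⟫ : ℝ) : ℂ) *
          Complex.exp (Complex.I * k * (⟪uc (2 * π * n / N), x⟫ : ℝ)))
      Filter.atTop
      (nhds (2 * π * Complex.I * ((⟪‖x‖⁻¹ • x, φ⟫ : ℝ) : ℂ) * besselJ 1 (k * ‖x‖))) := by
  set u : ℂ := φ 0 - φ 1 * Complex.I with hu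
  set u' : ℂ := φ 0 + φ 1 * Complex.I with hu'
  set a : ℂ := Complex.I * k * (x 0 - x 1 * Complex.I) / 2 with ha
  set b : ℂ := Complex.I * k * (x 0 + x 1 * Complex.I) / 2 with hb
  have h1 := tendsto_average_laurent a b 1
  have h2 := tendsto_average_laurent a b (-1)
  rw [tsum_laurent_one] at h1
  rw [tsum_laurent_neg_one] at h2
  have h := ((h1.const_mul (u / 2)).add (h2.const_mul (u' / 2))).const_mul (2 * π : ℂ)
  have hr : ‖x‖ ≠ 0 := norm_ne_zero_iff.2 hx
  have hrC : (‖x‖ : ℂ) ≠ 0 := by exact_mod_cast hr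
  have hnorm : (‖x‖ : ℂ) ^ 2 = (x 0 : ℂ) ^ 2 + (x 1 : ℂ) ^ 2 := by
    have := EuclideanSpace.real_norm_sq_eq x
    rw [Fin.sum_univ_two] at this
    exact_mod_cast this
  have hab : a * b = -(((k * ‖x‖ : ℝ) : ℂ) / 2) ^ 2 := by
    push_cast
    rw [div_pow, mul_pow, hnorm, ha, hb]
    linear_combination (k ^ 2 * ((x 0 : ℂ) ^ 2 - x 1 ^ 2 * (Complex.I ^ 2 - 1)) / 4) * Complex.I_sq
  have hub : u * b + u' * a = Complex.I * k * (x 0 * φ 0 + x 1 * φ 1) := by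
    rw [hu, hu', ha, hb]
    linear_combination (-Complex.I * k * (x 1 * φ 1)) * Complex.I_sq
  convert h using 1
  · funext N
    simp only [Finset.mul_sum, ← Finset.sum_add_distrib]
    refine Finset.sum_congr rfl fun n _ => ?_
    have hexp : Complex.I * k * ((⟪uc (2 * π * n / N), x⟫ : ℝ) : ℂ)
        = a * circlePoint N n + b * (circlePoint N n)⁻¹ := by
      rw [real_inner_comm, inner_uc, ha, hb]
      ring
    rw [hexp, inner_uc, zpow_one, zpow_neg_one]
    ring
  · congr 1
    have hin : ((⟪‖x‖⁻¹ • x, φ⟫ : ℝ) : ℂ) = (‖x‖ : ℂ)⁻¹ * (x 0 * φ 0 + x 1 * φ 1) := by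
      rw [real_inner_smul_left]
      simp only [PiLp.inner_apply, Fin.sum_univ_two, RCLike.inner_apply, conj_trivial]
      push_cast
      ring
    rw [besselJ_one, ← hab, hin]
    push_cast
    field_simp
    linear_combination (-diagSeries (a * b)) * hub
end

section
/- For every natural number s and every real number z, ∫₀^{2π} exp(i z cos t) cos(s t) dt = 2π i^s J_s(z). -/
/-!
Expand `exp (i z cos t)` as a power series in `z` and integrate term by term, which dominated
convergence allows because the `k`-th term is bounded by `|z| ^ k / k!` uniformly in `t`.
What remains are the Fourier moments `∫₀^{2π} cos t ^ k * cos (n t) dt`. By the product-to-sum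
formula they satisfy Pascal's recursion in `k`, so they vanish unless `n = i - j` with `i + j = k`,
and then equal `2π * (i + j).choose i / 2 ^ (i + j)` (`cosMoment_eq_zero`, `cosMoment_add`).
For `n = s` only the exponents `k = 2 m + s` survive, and they give the Bessel series.
-/

open scoped Real
open RealInnerProductSpace

/-- The Fourier moment `∫₀^{2π} cos t ^ k * cos (n t) dt`. The frequency `n` is an integer so that
the recursion `cosMoment_succ` needs no case distinction at `n = 0`. -/
noncomputable def cosMoment (k : ℕ) (n : ℤ) : ℝ :=
  ∫ t in (0:ℝ)..(2*π), Real.cos t ^ k * Real.cos (n * t)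

lemma cosMoment_zero_zero : cosMoment 0 0 = 2 * π := by
  simp [cosMoment]

lemma cosMoment_zero_of_ne {n : ℤ} (hn : n ≠ 0) : cosMoment 0 n = 0 := by
  have h : (n : ℝ) ≠ 0 := by exact_mod_cast hn
  have h2 : Real.sin ((n : ℝ) * (2 * π)) = 0 := by
    have := Real.sin_int_mul_pi (n * 2)
    push_cast at this
    rwa [mul_assoc] at this
  simp [cosMoment, intervalIntegral.integral_comp_mul_left (fun x => Real.cos x) h, h2]

lemma cosMoment_succ (k : ℕ) (n : ℤ) :
    cosMoment (k + 1) n = (cosMoment k (n + 1) + cosMoment k (n - 1)) / 2 := by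
  unfold cosMoment
  rw [← intervalIntegral.integral_add
    (Continuous.intervalIntegrable (by fun_prop) _ _)
    (Continuous.intervalIntegrable (by fun_prop) _ _), ← intervalIntegral.integral_div]
  congr 1
  ext t
  push_cast
  rw [add_mul, sub_mul, one_mul, Real.cos_add, Real.cos_sub]
  ring

lemma cosMoment_eq_zero (k : ℕ) (n : ℤ) (h : ∀ i j : ℕ, i + j = k → (i : ℤ) - j ≠ n) :
    cosMoment k n = 0 := by
  induction k generalizing n with
  | zero => exact cosMoment_zero_of_ne fun hn => h 0 0 rfl (by simp [hn])
  | succ k ih =>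
    rw [cosMoment_succ, ih (n + 1), ih (n - 1)]
    · simp
    · intro i j hij e
      exact h (i + 1) j (by omega) (by push_cast; omega)
    · intro i j hij e
      exact h i (j + 1) (by omega) (by push_cast; omega)

lemma cosMoment_add (i j : ℕ) :
    cosMoment (i + j) ((i : ℤ) - j) = 2 * π * (i + j).choose i / 2 ^ (i + j) := by
  obtain ⟨k, hk⟩ : ∃ k, i + j = k := ⟨_, rfl⟩
  induction k generalizing i j with
  | zero =>
    obtain ⟨rfl, rfl⟩ : i = 0 ∧ j = 0 := by omega
    simp [cosMoment_zero_zero]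
  | succ k ih =>
    -- On the edge of Pascal's triangle one of the two parents has frequency beyond `k`.
    rcases i with _ | i
    · obtain rfl : j = k + 1 := by omega
      have h1 := ih 0 k (by omega)
      have h2 : cosMoment k (((0 : ℕ) : ℤ) - ((k + 1 : ℕ) : ℤ) - 1) = 0 :=
        cosMoment_eq_zero _ _ (by intro i j h; push_cast; omega)
      rw [hk, cosMoment_succ, h2,
        show ((0 : ℕ) : ℤ) - ((k + 1 : ℕ) : ℤ) + 1 = ((0 : ℕ) : ℤ) - k by push_cast; ring]
      simp only [zero_add] at h1
      rw [h1]
      simp [pow_succ]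
      ring
    · rcases j with _ | j
      · obtain rfl : i = k := by omega
        have h1 := ih i 0 (by omega)
        have h2 : cosMoment i (((i + 1 : ℕ) : ℤ) - ((0 : ℕ) : ℤ) + 1) = 0 :=
          cosMoment_eq_zero _ _ (by intro i j h; push_cast; omega)
        rw [hk, cosMoment_succ, h2,
          show ((i + 1 : ℕ) : ℤ) - ((0 : ℕ) : ℤ) - 1 = (i : ℤ) - ((0 : ℕ) : ℤ) by push_cast; ring]
        simp only [add_zero] at h1
        rw [h1]
        simp [pow_succ]
        ring
      · have h1 := ih (i + 1) j (by omega)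
        have h2 := ih i (j + 1) (by omega)
        rw [show i + 1 + j = k by omega] at h1
        rw [show i + (j + 1) = k by omega] at h2
        rw [hk, cosMoment_succ,
          show ((i + 1 : ℕ) : ℤ) - ((j + 1 : ℕ) : ℤ) + 1 = ((i + 1 : ℕ) : ℤ) - j by push_cast; ring,
          show ((i + 1 : ℕ) : ℤ) - ((j + 1 : ℕ) : ℤ) - 1 = (i : ℤ) - ((j + 1 : ℕ) : ℤ) by
            push_cast; ring, h1, h2, Nat.choose_succ_succ]
        push_cast
        rw [pow_succ]
        field_simp
        ring

lemma hasSum_integral_exp_cos (s : ℕ) (z : ℝ) :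
    HasSum (fun k : ℕ => (Complex.I * z) ^ k / (Nat.factorial k : ℂ) * (cosMoment k s : ℂ))
      (∫ t in (0:ℝ)..(2*π),
        Complex.exp (Complex.I * z * Real.cos t) * ((Real.cos (s * t) : ℝ) : ℂ)) := by
  have key := intervalIntegral.hasSum_integral_of_dominated_convergence
    (μ := MeasureTheory.volume) (a := 0) (b := 2 * π)
    (F := fun (k : ℕ) (t : ℝ) => (Complex.I * z * Real.cos t) ^ k / (Nat.factorial k : ℂ) *
      ((Real.cos (s * t) : ℝ) : ℂ))
    (f := fun t : ℝ =>
      Complex.exp (Complex.I * z * Real.cos t) * ((Real.cos (s * t) : ℝ) : ℂ))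
    (fun k _ => |z| ^ k / (Nat.factorial k : ℝ))
    (fun k => Continuous.aestronglyMeasurable (by fun_prop))
    (fun k => Filter.Eventually.of_forall fun t _ => ?_)
    (Filter.Eventually.of_forall fun t _ => Real.summable_pow_div_factorial _)
    (by simp)
    (Filter.Eventually.of_forall fun t _ => ?_)
  · refine (congrArg (HasSum · _) (funext fun k => ?_)).mpr key
    unfold cosMoment
    rw [← intervalIntegral.integral_ofReal, ← intervalIntegral.integral_const_mul]
    congr 1
    ext t
    push_cast
    ring
  · rw [norm_mul, norm_div, norm_pow, norm_mul, norm_mul, Complex.norm_I, Complex.norm_real,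
      Complex.norm_real, Complex.norm_real, Complex.norm_natCast, one_mul]
    simp only [Real.norm_eq_abs]
    calc (|z| * |Real.cos t|) ^ k / (Nat.factorial k : ℝ) * |Real.cos (s * t)|
        ≤ (|z| * 1) ^ k / (Nat.factorial k : ℝ) * 1 := by
          gcongr
          · exact Real.abs_cos_le_one _
          · exact Real.abs_cos_le_one _
      _ = _ := by simp
  · apply HasSum.mul_right
    rw [Complex.exp_eq_exp_ℂ]
    exact NormedSpace.expSeries_div_hasSum_exp _

/-- ∫₀^{2π} exp(i z cos t) cos(s t) dt = 2π i^s J_s(z). -/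
theorem integral_exp_cos_eq_bessel (s : ℕ) (z : ℝ) :
    (∫ t in (0:ℝ)..(2*π),
        Complex.exp (Complex.I * z * Real.cos t) * ((Real.cos (s * t) : ℝ) : ℂ))
      = 2 * π * Complex.I ^ s * besselJ s z := by
  have h := hasSum_integral_exp_cos s z
  have hinj : Function.Injective (fun m : ℕ => 2 * m + s) := fun a b hab => by
    simp only at hab
    omega
  rw [← hinj.hasSum_iff] at h
  · rw [← h.tsum_eq, besselJ, Complex.ofReal_tsum, ← tsum_mul_left]
    congr 1
    ext m
    have hm := cosMoment_add (m + s) m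
    rw [show m + s + m = 2 * m + s by ring,
      show ((m + s : ℕ) : ℤ) - m = s by push_cast; ring] at hm
    have hc : ((2 * m + s).choose (m + s) : ℂ) * (m + s).factorial * m.factorial
        = (2 * m + s).factorial := by
      have := Nat.choose_mul_factorial_mul_factorial (show m + s ≤ 2 * m + s by omega)
      rw [show 2 * m + s - (m + s) = m by omega] at this
      exact_mod_cast this
    have f1 : ((m + s).factorial : ℂ) ≠ 0 := by exact_mod_cast Nat.factorial_ne_zero _
    have f2 : (m.factorial : ℂ) ≠ 0 := by exact_mod_cast Nat.factorial_ne_zero _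
    have f3 : ((2 * m + s).choose (m + s) : ℂ) ≠ 0 := by
      exact_mod_cast (Nat.choose_pos (by omega)).ne'
    have hI : Complex.I ^ (2 * m + s) = (-1) ^ m * Complex.I ^ s := by
      rw [pow_add, pow_mul, Complex.I_sq]
    simp only [Function.comp_apply]
    rw [hm, ← hc, mul_pow, hI]
    push_cast
    rw [div_pow]
    field_simp
  · intro k hk
    rw [cosMoment_eq_zero k s]
    · simp
    · intro i j hij e
      exact hk ⟨j, by simp only; omega⟩
end

section
/- (Jacobi–Anger expansion) For all real numbers z and φ, the series Σ_{s=1}^∞ i^s J_s(z) cos(s φ) converges absolutely and exp(i z cos φ) = J₀(z) + 2 Σ_{s=1}^∞ i^s J_s(z) cos(s φ). -/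
/-!
The proof expands `exp (i z cos φ) = exp a * exp b` with `a = (i z / 2) e^{iφ}` and
`b = (i z / 2) e^{-iφ}` into the absolutely convergent double series
`∑_{j,k} a^j / j! * b^k / k!` and sums it along the diagonals `j - k = n`, `n ∈ ℤ`
(`diagEquiv`). The diagonal `n` contributes `i^{|n|} J_{|n|}(z) e^{inφ}` (`diagonal_term`,
`diagonal_tsum`), and pairing `n` with `-n` turns the exponentials into cosines.
-/

open scoped Real
open RealInnerProductSpace

/-- The pairs `(j, k)` of naturals, indexed by their difference `n = j - k` and their
minimum `m`. -/
def diagEquiv : ℤ × ℕ ≃ ℕ × ℕ where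
  toFun p := (p.2 + p.1.toNat, p.2 + (-p.1).toNat)
  invFun q := ((q.1 : ℤ) - q.2, min q.1 q.2)
  left_inv p := by
    rcases p with ⟨n, m⟩
    ext <;> simp only <;> omega
  right_inv q := by
    rcases q with ⟨j, k⟩
    ext <;> simp only <;> omega

lemma diagonal_term (z : ℝ) (w v : ℂ) (hwv : w * v = 1) (n m : ℕ) :
    (Complex.I * (z / 2) * w) ^ (m + n) / (Nat.factorial (m + n) : ℂ) *
        ((Complex.I * (z / 2) * v) ^ m / (Nat.factorial m : ℂ)) =
      Complex.I ^ n * w ^ n * (((-1 : ℝ) ^ m / (Nat.factorial m * Nat.factorial (m + n)) *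
        (z / 2) ^ (2 * m + n) : ℝ) : ℂ) := by
  have h1 : (Complex.I * (z / 2) * w) ^ (m + n) * (Complex.I * (z / 2) * v) ^ m =
      (Complex.I ^ 2) ^ m * Complex.I ^ n * w ^ n * (w * v) ^ m *
        ((z : ℂ) / 2) ^ (2 * m + n) := by
    ring
  rw [div_mul_div_comm, h1, hwv, Complex.I_sq, one_pow]
  push_cast
  ring

lemma diagonal_tsum (z : ℝ) (w v : ℂ) (hwv : w * v = 1) (n : ℕ) :
    ∑' m : ℕ, (Complex.I * (z / 2) * w) ^ (m + n) / (Nat.factorial (m + n) : ℂ) *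
        ((Complex.I * (z / 2) * v) ^ m / (Nat.factorial m : ℂ)) =
      Complex.I ^ n * w ^ n * (besselJ n z : ℂ) := by
  simp_rw [diagonal_term z w v hwv, tsum_mul_left, ← Complex.ofReal_tsum]
  rfl

/-- Summation of a double series along the diagonals, those of difference `n` and `-n` being
paired. The main diagonal is counted twice, which accounts for the extra term in the sum. -/
lemma hasSum_diagonals {F : ℕ × ℕ → ℂ} {S : ℂ} (hF : HasSum F S) :
    HasSum (fun n : ℕ => ∑' m : ℕ, F (m + n, m) + ∑' m : ℕ, F (m, m + n))
      (S + ∑' m : ℕ, F (m, m)) := by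
  have hG := diagEquiv.hasSum_iff.mpr hF
  have hZ := (hG.prod_fiberwise fun n => (hG.summable.prod_factor n).hasSum).nat_add_neg
  simpa [diagEquiv] using hZ

lemma hasSum_mul_pairs {f g : ℕ → ℂ} {a b : ℂ} (hf : HasSum f a) (hg : HasSum g b) :
    HasSum (fun q : ℕ × ℕ => f q.1 * g q.2) (a * b) :=
  hf.mul hg (summable_mul_of_summable_norm hf.summable.norm hg.summable.norm)

/-- The bilateral form of the expansion, `exp (i z (w + w⁻¹) / 2) = ∑_{n ∈ ℤ} i^n J_n(z) w^n`,
with the terms of index `n` and `-n` paired; the index `0` is counted twice, hence the extra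
`J_0(z)` in the sum. Here `v` is `w⁻¹`. -/
lemma hasSum_paired (z : ℝ) (w v : ℂ) (hwv : w * v = 1) :
    HasSum (fun n : ℕ => Complex.I ^ n * (besselJ n z : ℂ) * (w ^ n + v ^ n))
      (Complex.exp (Complex.I * (z / 2) * w) * Complex.exp (Complex.I * (z / 2) * v) +
        besselJ 0 z) := by
  have hexp (x : ℂ) : HasSum (fun n : ℕ => x ^ n / (Nat.factorial n : ℂ)) (Complex.exp x) := by
    rw [Complex.exp_eq_exp_ℂ]
    exact NormedSpace.expSeries_div_hasSum_exp x
  have hD := hasSum_diagonals (hasSum_mul_pairs (hexp (Complex.I * (z / 2) * w))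
    (hexp (Complex.I * (z / 2) * v)))
  have hpos := diagonal_tsum z w v hwv
  have hneg := diagonal_tsum z v w (by rw [mul_comm, hwv])
  have h0 := hpos 0
  simp only [add_zero, pow_zero, one_mul] at h0
  have hneg' (n : ℕ) : ∑' m : ℕ, (Complex.I * (z / 2) * w) ^ m / (Nat.factorial m : ℂ) *
        ((Complex.I * (z / 2) * v) ^ (m + n) / (Nat.factorial (m + n) : ℂ)) =
      Complex.I ^ n * v ^ n * (besselJ n z : ℂ) := by
    rw [← hneg]
    exact tsum_congr fun m => mul_comm _ _
  simp only [hpos, hneg', h0] at hD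
  have hfun : (fun n : ℕ => Complex.I ^ n * (besselJ n z : ℂ) * (w ^ n + v ^ n)) = fun n : ℕ =>
      Complex.I ^ n * w ^ n * (besselJ n z : ℂ) + Complex.I ^ n * v ^ n * (besselJ n z : ℂ) := by
    funext n
    ring
  rw [hfun]
  exact hD

/-- Jacobi–Anger expansion: the series Σ_{s=1}^∞ i^s J_s(z) cos(sφ) converges
absolutely and exp(i z cos φ) = J₀(z) + 2 Σ_{s=1}^∞ i^s J_s(z) cos(sφ). -/
theorem jacobiAnger (z φ : ℝ) :
    Summable (fun s : ℕ =>
      ‖Complex.I ^ (s+1) * ((besselJ (s+1) z : ℝ) : ℂ) *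
        ((Real.cos (((s:ℝ)+1) * φ) : ℝ) : ℂ)‖) ∧
    Complex.exp (Complex.I * z * Real.cos φ)
      = besselJ 0 z + 2 * ∑' s : ℕ,
          Complex.I ^ (s+1) * ((besselJ (s+1) z : ℝ) : ℂ) *
            ((Real.cos (((s:ℝ)+1) * φ) : ℝ) : ℂ) := by
  set w := Complex.exp (φ * Complex.I) with hw
  set v := Complex.exp (-φ * Complex.I) with hv
  have hwv : w * v = 1 := by
    rw [hw, hv, ← Complex.exp_add]
    simp
  have hcos (n : ℕ) : w ^ n + v ^ n = 2 * ((Real.cos ((n : ℝ) * φ) : ℝ) : ℂ) := by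
    rw [hw, hv, ← Complex.exp_nat_mul, ← Complex.exp_nat_mul, Complex.ofReal_cos,
      Complex.two_cos]
    push_cast
    congr 2 <;> ring
  have hexp : Complex.exp (Complex.I * z * Real.cos φ) =
      Complex.exp (Complex.I * (z / 2) * w) * Complex.exp (Complex.I * (z / 2) * v) := by
    rw [← Complex.exp_add]
    congr 1
    have h1 := hcos 1
    simp only [pow_one, Nat.cast_one, one_mul] at h1
    linear_combination (-(Complex.I * z / 2)) * h1
  have hS := hasSum_paired z w v hwv
  rw [← hexp, ← hasSum_nat_add_iff' 1] at hS
  have hT : HasSum (fun s : ℕ => Complex.I ^ (s+1) * ((besselJ (s+1) z : ℝ) : ℂ) *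
      ((Real.cos (((s:ℝ)+1) * φ) : ℝ) : ℂ))
      ((Complex.exp (Complex.I * z * Real.cos φ) - besselJ 0 z) / 2) := by
    have hval : (Complex.exp (Complex.I * z * Real.cos φ) - besselJ 0 z) / 2 =
        (Complex.exp (Complex.I * z * Real.cos φ) + besselJ 0 z - ∑ i ∈ Finset.range 1,
          Complex.I ^ i * (besselJ i z : ℂ) * (w ^ i + v ^ i)) / 2 := by
      simp only [Finset.sum_range_one, pow_zero]
      ring
    rw [hval]
    refine (hS.div_const 2).congr_fun fun s => ?_
    rw [hcos]
    push_cast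
    ring
  refine ⟨hT.summable.norm, ?_⟩
  rw [hT.tsum_eq]
  ring
end

section
/- Let k > 0, let d, t ∈ ℝ² be unit vectors, and let c, x ∈ ℝ² with x ≠ c. Then the tangential-derivative term satisfies the exact identity ∫₀^{2π} (i k (d · t)) exp(i k d · c) (i k (θ(τ) · t)) exp(i k θ(τ) · (x − c)) dτ = −2π i k² (d · t) exp(i k d · c) (((x − c)/‖x − c‖) · t) J₁(k‖x − c‖). -/
/-!
Write `x - c = r (cos φ, sin φ)` with `r = ‖x - c‖ > 0`. Then `θ(τ) · (x - c) = r cos (τ - φ)`, and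
in the orthonormal frame `(cos φ, sin φ)`, `(-sin φ, cos φ)` the factor `θ(τ) · t` becomes
`cos (τ - φ) a + sin (τ - φ) b`, where `a = ((x - c) / r) · t`. By periodicity the shift by `φ` can be
dropped. The sine part integrates to zero, being the derivative of a periodic function
(`integral_sin_mul_exp_cos`). The cosine part is the classical integral representation
`∫₀^{2π} cos τ exp (i z cos τ) dτ = 2 π i J₁(z)` (`integral_cos_mul_exp_cos`), obtained by integrating
the exponential series term by term and inserting the moments of the cosine
(`integral_cos_pow_odd_period`, `integral_cos_pow_even_period`).
-/

open scoped Real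
open RealInnerProductSpace

lemma integral_cos_pow_period_succ (n : ℕ) :
    ∫ τ in (0:ℝ)..(2*π), Real.cos τ ^ (n + 2)
      = (n + 1) / (n + 2) * ∫ τ in (0:ℝ)..(2*π), Real.cos τ ^ n := by
  rw [integral_cos_pow]
  simp

lemma integral_cos_pow_odd_period (m : ℕ) :
    ∫ τ in (0:ℝ)..(2*π), Real.cos τ ^ (2 * m + 1) = 0 := by
  induction m with
  | zero => simp
  | succ m ih =>
    rw [show 2 * (m + 1) + 1 = (2 * m + 1) + 2 by ring, integral_cos_pow_period_succ, ih, mul_zero]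

lemma integral_cos_pow_even_period (m : ℕ) :
    ∫ τ in (0:ℝ)..(2*π), Real.cos τ ^ (2 * m)
      = 2 * π * (Nat.factorial (2 * m) / (4 ^ m * (Nat.factorial m : ℝ) ^ 2)) := by
  induction m with
  | zero => simp
  | succ m ih =>
    rw [show 2 * (m + 1) = (2 * m) + 2 by ring, integral_cos_pow_period_succ, ih,
      Nat.factorial_succ (2 * m + 1), Nat.factorial_succ (2 * m), Nat.factorial_succ m]
    have h : (Nat.factorial m : ℝ) ≠ 0 := by positivity
    push_cast
    field_simp
    ring

/-- Term-by-term integration of the exponential series of `exp (i z cos τ)` against `cos τ`. -/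
lemma hasSum_integral_cos_mul_exp_cos (z : ℝ) :
    HasSum (fun n : ℕ => (Complex.I * z) ^ n / (Nat.factorial n : ℂ) *
        ((∫ τ in (0:ℝ)..(2*π), Real.cos τ ^ (n + 1) : ℝ) : ℂ))
      (∫ τ in (0:ℝ)..(2*π), (Real.cos τ : ℂ) * Complex.exp (Complex.I * z * (Real.cos τ : ℂ))) := by
  have key := intervalIntegral.hasSum_integral_of_dominated_convergence
    (μ := MeasureTheory.volume) (a := 0) (b := 2 * π)
    (F := fun (n : ℕ) (τ : ℝ) => (Complex.I * z) ^ n / (Nat.factorial n : ℂ) *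
      ((Real.cos τ ^ (n + 1) : ℝ) : ℂ))
    (f := fun τ : ℝ => (Real.cos τ : ℂ) * Complex.exp (Complex.I * z * (Real.cos τ : ℂ)))
    (fun n _ => |z| ^ n / (Nat.factorial n : ℝ))
    (fun n => by
      apply Continuous.aestronglyMeasurable
      fun_prop)
    (fun n => Filter.Eventually.of_forall fun τ _ => by
      have h1 : |Real.cos τ| ^ (n + 1) ≤ 1 :=
        pow_le_one₀ (abs_nonneg _) (Real.abs_cos_le_one τ)
      have h2 : 0 ≤ |z| ^ n / (Nat.factorial n : ℝ) := by positivity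
      rw [norm_mul, norm_div, norm_pow, norm_mul, Complex.norm_I, one_mul, Complex.norm_real,
        Complex.norm_real, Complex.norm_natCast, norm_pow, Real.norm_eq_abs, Real.norm_eq_abs]
      exact mul_le_of_le_one_right h2 h1)
    (Filter.Eventually.of_forall fun τ _ => Real.summable_pow_div_factorial |z|)
    (by simp)
    (Filter.Eventually.of_forall fun τ _ => by
      have h := (NormedSpace.expSeries_div_hasSum_exp
        (Complex.I * z * (Real.cos τ : ℂ))).mul_left (Real.cos τ : ℂ)
      rw [← Complex.exp_eq_exp_ℂ] at h
      refine h.congr_fun fun n => ?_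
      push_cast
      ring)
  refine key.congr_fun fun n => ?_
  rw [intervalIntegral.integral_const_mul, intervalIntegral.integral_ofReal]

lemma integral_cos_mul_exp_cos (z : ℝ) :
    ∫ τ in (0:ℝ)..(2*π), (Real.cos τ : ℂ) * Complex.exp (Complex.I * z * (Real.cos τ : ℂ))
      = 2 * π * Complex.I * besselJ 1 z := by
  have h := hasSum_integral_cos_mul_exp_cos z
  -- Only odd `n` contribute, since odd moments of the cosine vanish.
  have hinj : Function.Injective (fun m : ℕ => 2 * m + 1) := fun a b hab => by
    simp only at hab
    omega
  rw [← hinj.hasSum_iff] at h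
  · rw [← h.tsum_eq, besselJ, Complex.ofReal_tsum, ← tsum_mul_left]
    refine tsum_congr fun m => ?_
    simp only [Function.comp_apply]
    rw [show 2 * m + 1 + 1 = 2 * (m + 1) by ring, integral_cos_pow_even_period,
      show 2 * (m + 1) = (2 * m + 1) + 1 by ring, Nat.factorial_succ (2 * m + 1),
      Nat.factorial_succ m]
    have h1 : (Nat.factorial m : ℂ) ≠ 0 := by exact_mod_cast Nat.factorial_ne_zero m
    have h2 : (Nat.factorial (2 * m + 1) : ℂ) ≠ 0 := by
      exact_mod_cast Nat.factorial_ne_zero (2 * m + 1)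
    have h3 : (m + 1 : ℂ) ≠ 0 := by exact_mod_cast Nat.succ_ne_zero m
    have h4 : (4 : ℂ) ^ m = (2 ^ m) ^ 2 := by rw [← pow_mul, mul_comm, pow_mul]; norm_num
    push_cast
    generalize (Nat.factorial (2 * m + 1) : ℂ) = q at h2 ⊢
    rw [mul_pow, pow_succ Complex.I, pow_mul Complex.I, Complex.I_sq, div_pow, pow_succ (4 : ℂ), h4,
      pow_succ (2 : ℂ), mul_comm 2 m, pow_mul (2 : ℂ)]
    field_simp
    ring
  · intro n hn
    rcases Nat.even_or_odd' n with ⟨m, rfl | rfl⟩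
    · rw [integral_cos_pow_odd_period]
      simp
    · exact absurd ⟨m, rfl⟩ hn

lemma integral_sin_mul_exp_cos (z : ℝ) (hz : z ≠ 0) :
    ∫ τ in (0:ℝ)..(2*π), (Real.sin τ : ℂ) * Complex.exp (Complex.I * z * (Real.cos τ : ℂ)) = 0 := by
  have hz' : (z : ℂ) ≠ 0 := by exact_mod_cast hz
  have hd : ∀ τ ∈ Set.uIcc (0:ℝ) (2*π), HasDerivAt
      (fun τ : ℝ => -(Complex.I * z)⁻¹ * Complex.exp (Complex.I * z * (Real.cos τ : ℂ)))
      ((Real.sin τ : ℂ) * Complex.exp (Complex.I * z * (Real.cos τ : ℂ))) τ := fun τ _ => by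
    have h := (((Real.hasDerivAt_cos τ).ofReal_comp.const_mul
      (Complex.I * z)).cexp).const_mul (-(Complex.I * z)⁻¹)
    refine h.congr_deriv ?_
    have := Complex.I_ne_zero
    push_cast
    field_simp
  rw [intervalIntegral.integral_eq_sub_of_hasDerivAt hd
    (Continuous.intervalIntegrable (by fun_prop) _ _)]
  simp

lemma exists_polar (v : EuclideanSpace ℝ (Fin 2)) :
    ∃ φ : ℝ, v 0 = ‖v‖ * Real.cos φ ∧ v 1 = ‖v‖ * Real.sin φ := by
  have hn : ‖v‖ = ‖(⟨v 0, v 1⟩ : ℂ)‖ := by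
    rw [EuclideanSpace.norm_eq, Complex.norm_def, Complex.normSq_mk]
    simp [Fin.sum_univ_two, sq]
  refine ⟨Complex.arg ⟨v 0, v 1⟩, ?_, ?_⟩
  · rw [hn, Complex.norm_mul_cos_arg]
  · rw [hn, Complex.norm_mul_sin_arg]

lemma inner_uc_s8 (τ : ℝ) (w : EuclideanSpace ℝ (Fin 2)) :
    (⟪uc τ, w⟫ : ℝ) = Real.cos τ * w 0 + Real.sin τ * w 1 := by
  simp [uc, PiLp.inner_apply, Fin.sum_univ_two, mul_comm]

/-- The vector-valued form of the integral representation of `J₁`, before multiplication by the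
constant factors. -/
lemma integral_inner_uc_mul_exp (k : ℝ) (hk : 0 < k) (w v : EuclideanSpace ℝ (Fin 2)) (hv : v ≠ 0) :
    ∫ τ in (0:ℝ)..(2*π), ((⟪uc τ, w⟫ : ℝ) : ℂ) * Complex.exp (Complex.I * k * (⟪uc τ, v⟫ : ℝ))
      = 2 * π * Complex.I * ((⟪‖v‖⁻¹ • v, w⟫ : ℝ) : ℂ) * besselJ 1 (k * ‖v‖) := by
  obtain ⟨φ, h0, h1⟩ := exists_polar v
  have hr : ‖v‖ ≠ 0 := norm_ne_zero_iff.mpr hv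
  set r := ‖v‖
  set a : ℝ := Real.cos φ * w 0 + Real.sin φ * w 1 with ha
  set b : ℝ := -Real.sin φ * w 0 + Real.cos φ * w 1 with hb
  have hin : (⟪r⁻¹ • v, w⟫ : ℝ) = a := by
    simp only [PiLp.inner_apply, Fin.sum_univ_two, PiLp.smul_apply, h0, h1, smul_eq_mul,
      RCLike.inner_apply, conj_trivial, ha]
    field_simp
  let E : ℝ → ℂ := fun σ => Complex.exp (Complex.I * (k * r : ℝ) * (Real.cos σ : ℂ))
  let g : ℝ → ℂ := fun σ => (a : ℂ) * ((Real.cos σ : ℂ) * E σ) + (b : ℂ) * ((Real.sin σ : ℂ) * E σ)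
  have hg : ∀ τ, ((⟪uc τ, w⟫ : ℝ) : ℂ) * Complex.exp (Complex.I * k * (⟪uc τ, v⟫ : ℝ))
      = g (τ - φ) := fun τ => by
    have e1 : (⟪uc τ, v⟫ : ℝ) = r * Real.cos (τ - φ) := by
      rw [inner_uc_s8, h0, h1, Real.cos_sub]
      ring
    have e2 : (⟪uc τ, w⟫ : ℝ) = a * Real.cos (τ - φ) + b * Real.sin (τ - φ) := by
      rw [inner_uc_s8, Real.cos_sub, Real.sin_sub, ha, hb]
      linear_combination (-(Real.cos τ * w 0) - Real.sin τ * w 1) * Real.sin_sq_add_cos_sq φ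
    simp only [g, E, e1, e2]
    push_cast
    ring_nf
  have hper : Function.Periodic g (2 * π) := fun σ => by
    simp only [g, E, Real.cos_add_two_pi, Real.sin_add_two_pi]
  have hshift : ∫ τ in (0:ℝ)..(2*π), g (τ - φ) = ∫ σ in (0:ℝ)..(2*π), g σ := by
    rw [intervalIntegral.integral_comp_sub_right]
    have := hper.intervalIntegral_add_eq (0 - φ) 0
    rw [zero_add] at this
    rw [← this]
    congr 1
    ring
  simp_rw [hg]
  rw [hshift, hin]
  simp only [g]
  rw [intervalIntegral.integral_add (Continuous.intervalIntegrable (by fun_prop) _ _)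
      (Continuous.intervalIntegrable (by fun_prop) _ _),
    intervalIntegral.integral_const_mul, intervalIntegral.integral_const_mul]
  simp only [E]
  rw [integral_cos_mul_exp_cos, integral_sin_mul_exp_cos _ (mul_ne_zero hk.ne' hr)]
  ring

/-- the tangential-derivative term satisfies
∫₀^{2π} (ik(d·t)) e^{ikd·c} (ik(θ(τ)·t)) e^{ikθ(τ)·(x−c)} dτ
  = −2πik²(d·t) e^{ikd·c} (((x−c)/‖x−c‖)·t) J₁(k‖x−c‖). -/
theorem integral_tangentialDerivative_term (k : ℝ) (hk : 0 < k)
    (d tv c x : EuclideanSpace ℝ (Fin 2)) (hd : ‖d‖ = 1) (htv : ‖tv‖ = 1) (hx : x ≠ c) :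
    (∫ τ in (0:ℝ)..(2*π),
        (Complex.I * k * ((⟪d, tv⟫ : ℝ) : ℂ)) * Complex.exp (Complex.I * k * (⟪d, c⟫ : ℝ)) *
          (Complex.I * k * ((⟪uc τ, tv⟫ : ℝ) : ℂ)) *
          Complex.exp (Complex.I * k * (⟪uc τ, x - c⟫ : ℝ)))
      = -(2 * π * Complex.I * k ^ 2 * ((⟪d, tv⟫ : ℝ) : ℂ) *
          Complex.exp (Complex.I * k * (⟪d, c⟫ : ℝ)) *
          ((⟪‖x - c‖⁻¹ • (x - c), tv⟫ : ℝ) : ℂ) * besselJ 1 (k * ‖x - c‖)) := by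
  have h := integral_inner_uc_mul_exp k hk tv (x - c) (sub_ne_zero.mpr hx)
  have hfac : ∀ τ : ℝ,
      (Complex.I * k * ((⟪d, tv⟫ : ℝ) : ℂ)) * Complex.exp (Complex.I * k * (⟪d, c⟫ : ℝ)) *
          (Complex.I * k * ((⟪uc τ, tv⟫ : ℝ) : ℂ)) *
          Complex.exp (Complex.I * k * (⟪uc τ, x - c⟫ : ℝ))
        = (-(k : ℂ) ^ 2 * ((⟪d, tv⟫ : ℝ) : ℂ) * Complex.exp (Complex.I * k * (⟪d, c⟫ : ℝ))) *
          (((⟪uc τ, tv⟫ : ℝ) : ℂ) * Complex.exp (Complex.I * k * (⟪uc τ, x - c⟫ : ℝ))) := fun τ => by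
    linear_combination ((k : ℂ) ^ 2 * ((⟪d, tv⟫ : ℝ) : ℂ) *
      Complex.exp (Complex.I * k * (⟪d, c⟫ : ℝ)) * ((⟪uc τ, tv⟫ : ℝ) : ℂ) *
      Complex.exp (Complex.I * k * (⟪uc τ, x - c⟫ : ℝ))) * Complex.I_sq
  simp_rw [hfac]
  rw [intervalIntegral.integral_const_mul, h]
  ring
end

section
/- For every real number z, the derivative of z ↦ z (J₀(z)² + J₁(z)²) equals J₀(z)² − J₁(z)²; equivalently, z (J₀(z)² + J₁(z)²) is an antiderivative of J₀² − J₁² on ℝ. -/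
/-!
The two classical recurrences `J₀' = -J₁` and `z J₁' + J₁ = z J₀` give the claim by the product
rule: `(z (J₀² + J₁²))' = J₀² + J₁² - 2 z J₀ J₁ + 2 J₁ (z J₀ - J₁) = J₀² - J₁²`.
Both recurrences follow by comparing coefficients once the defining series may be differentiated
term by term (`hasDerivAt_besselJ`); on `|z| < 2r` with `r ≥ 1` the differentiated series is
dominated by `∑ rⁿ (r²)ᵐ / m!`.
-/

open scoped Real
open RealInnerProductSpace

/-- The `m`-th term of the series defining `besselJ n z`. -/
noncomputable def besselTerm (n m : ℕ) (z : ℝ) : ℝ :=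
  (-1 : ℝ) ^ m / (Nat.factorial m * Nat.factorial (m + n)) * (z / 2) ^ (2 * m + n)

/-- The derivative of `besselTerm n m`. For `n = m = 0` the exponent truncates to `0`, but the
factor `2 * m + n` vanishes. -/
noncomputable def besselTermDeriv (n m : ℕ) (z : ℝ) : ℝ :=
  (-1 : ℝ) ^ m / (Nat.factorial m * Nat.factorial (m + n)) *
    (((2 * m + n : ℕ) : ℝ) * (z / 2) ^ (2 * m + n - 1) * (1 / 2))

lemma hasDerivAt_besselTerm (n m : ℕ) (z : ℝ) :
    HasDerivAt (besselTerm n m) (besselTermDeriv n m z) z :=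
  ((((hasDerivAt_id z).div_const 2).pow (2 * m + n)).const_mul _)

lemma summable_bound (n : ℕ) (r : ℝ) :
    Summable fun m : ℕ => r ^ n * ((r ^ 2) ^ m / (Nat.factorial m : ℝ)) :=
  (Real.summable_pow_div_factorial (r ^ 2)).mul_left _

lemma summable_besselTerm (n : ℕ) (z : ℝ) : Summable fun m => besselTerm n m z := by
  refine Summable.of_norm_bounded (summable_bound n |z / 2|) fun m => ?_
  have h1 : (1 : ℝ) ≤ (Nat.factorial (m + n) : ℝ) := by
    exact_mod_cast Nat.one_le_iff_ne_zero.2 (Nat.factorial_ne_zero _)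
  have h0 : (0 : ℝ) < (Nat.factorial m : ℝ) := by exact_mod_cast Nat.factorial_pos m
  have e : ‖besselTerm n m z‖ =
      |z / 2| ^ (2 * m + n) / ((Nat.factorial m : ℝ) * Nat.factorial (m + n)) := by
    simp only [besselTerm, norm_mul, norm_div, norm_pow, norm_neg, norm_one, one_pow,
      Real.norm_eq_abs, Nat.abs_cast, abs_div]
    ring
  rw [e, ← pow_mul, ← mul_div_assoc, ← pow_add, add_comm n]
  gcongr
  exact le_mul_of_one_le_right h0.le h1

lemma norm_besselTermDeriv_le (n m : ℕ) {r z : ℝ} (hr : 1 ≤ r) (hz : |z / 2| ≤ r) :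
    ‖besselTermDeriv n m z‖ ≤ r ^ n * ((r ^ 2) ^ m / (Nat.factorial m : ℝ)) := by
  have h1 : ((2 * m + n : ℕ) : ℝ) * (1 / 2) ≤ (Nat.factorial (m + n) : ℝ) := by
    have : ((m + n : ℕ) : ℝ) ≤ (Nat.factorial (m + n) : ℝ) := by
      exact_mod_cast Nat.self_le_factorial _
    push_cast at this ⊢
    have : (0 : ℝ) ≤ n := n.cast_nonneg
    linarith
  have h0 : (0 : ℝ) < (Nat.factorial m : ℝ) := by exact_mod_cast Nat.factorial_pos m
  have h0' : (0 : ℝ) < (Nat.factorial (m + n) : ℝ) := by exact_mod_cast Nat.factorial_pos _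
  have h2 : |z / 2| ^ (2 * m + n - 1) ≤ r ^ (2 * m + n) :=
    (pow_le_pow_left₀ (abs_nonneg _) hz _).trans (pow_le_pow_right₀ hr (Nat.sub_le _ _))
  have e : ‖besselTermDeriv n m z‖ = (((2 * m + n : ℕ) : ℝ) * (1 / 2)) *
      |z / 2| ^ (2 * m + n - 1) / ((Nat.factorial (m + n) : ℝ) * Nat.factorial m) := by
    simp only [besselTermDeriv, norm_mul, norm_div, norm_pow, norm_neg, norm_one, one_pow,
      Real.norm_eq_abs, Nat.abs_cast, abs_div, abs_two]
    ring
  rw [e, ← pow_mul, ← mul_div_assoc (r ^ n), ← pow_add, add_comm n (2 * m)]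
  calc _ ≤ (Nat.factorial (m + n) : ℝ) * r ^ (2 * m + n) /
        ((Nat.factorial (m + n) : ℝ) * Nat.factorial m) := by gcongr
    _ = _ := mul_div_mul_left _ _ h0'.ne'

lemma abs_half_le_of_lt {y z : ℝ} (hy : |y| < |z| + 2) : |y / 2| ≤ (|z| + 2) / 2 := by
  rw [abs_div, abs_two]
  linarith

lemma summable_besselTermDeriv (n : ℕ) (z : ℝ) : Summable fun m => besselTermDeriv n m z :=
  Summable.of_norm_bounded (summable_bound n ((|z| + 2) / 2)) fun m =>
    norm_besselTermDeriv_le n m (by linarith [abs_nonneg z]) (abs_half_le_of_lt (by linarith))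

lemma hasDerivAt_besselJ (n : ℕ) (z : ℝ) :
    HasDerivAt (besselJ n) (∑' m, besselTermDeriv n m z) z := by
  have hz : z ∈ Metric.ball (0 : ℝ) (|z| + 2) := by simp
  refine hasDerivAt_tsum_of_isPreconnected (g := fun m y => besselTerm n m y)
    (summable_bound n ((|z| + 2) / 2)) Metric.isOpen_ball
    (convex_ball (0 : ℝ) (|z| + 2)).isPreconnected
    (fun m y _ => hasDerivAt_besselTerm n m y) (fun m y hy => ?_) hz
    (summable_besselTerm n z) hz
  refine norm_besselTermDeriv_le n m (by linarith [abs_nonneg z]) (abs_half_le_of_lt ?_)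
  simpa using hy

/-- The recurrence `J₀' = -J₁`: the constant term drops out and the index shifts by one. -/
lemma tsum_besselTermDeriv_zero (z : ℝ) : ∑' m, besselTermDeriv 0 m z = -besselJ 1 z := by
  rw [(summable_besselTermDeriv 0 z).tsum_eq_zero_add]
  have h0 : besselTermDeriv 0 0 z = 0 := by simp [besselTermDeriv]
  rw [h0, zero_add, besselJ, ← tsum_neg]
  refine tsum_congr fun m => ?_
  have hm : (Nat.factorial m : ℝ) ≠ 0 := by exact_mod_cast Nat.factorial_ne_zero m
  have hm' : (m : ℝ) + 1 ≠ 0 := by positivity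
  have he : 2 * (m + 1) + 0 - 1 = 2 * m + 1 := by omega
  rw [besselTermDeriv, he]
  simp only [add_zero, Nat.factorial_succ]
  push_cast
  field_simp
  ring

/-- The recurrence `z J₁' + J₁ = z J₀`. -/
lemma mul_tsum_besselTermDeriv_one (z : ℝ) :
    z * ∑' m, besselTermDeriv 1 m z + besselJ 1 z = z * besselJ 0 z := by
  have h1 : besselJ 1 z = ∑' m, besselTerm 1 m z := rfl
  have h0 : besselJ 0 z = ∑' m, besselTerm 0 m z := rfl
  rw [h1, h0, ← tsum_mul_left, ← tsum_mul_left,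
    ← ((summable_besselTermDeriv 1 z).mul_left z).tsum_add (summable_besselTerm 1 z)]
  refine tsum_congr fun m => ?_
  have hm : (Nat.factorial m : ℝ) ≠ 0 := by exact_mod_cast Nat.factorial_ne_zero m
  have hm' : (m : ℝ) + 1 ≠ 0 := by positivity
  simp only [besselTermDeriv, besselTerm, add_zero, Nat.factorial_succ, Nat.add_sub_cancel,
    pow_succ _ (2 * m)]
  push_cast
  field_simp
  ring

/-- z (J₀(z)² + J₁(z)²) is an antiderivative of J₀² − J₁² on ℝ. -/
theorem hasDerivAt_mul_besselLambda (z : ℝ) :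
    HasDerivAt (fun z : ℝ => z * (besselJ 0 z ^ 2 + besselJ 1 z ^ 2))
      (besselJ 0 z ^ 2 - besselJ 1 z ^ 2) z := by
  have h0 := hasDerivAt_besselJ 0 z
  rw [tsum_besselTermDeriv_zero] at h0
  have h1 := hasDerivAt_besselJ 1 z
  have hrec := mul_tsum_besselTermDeriv_one z
  refine ((hasDerivAt_id z).mul ((h0.pow 2).add (h1.pow 2))).congr_deriv ?_
  simp only [id, Pi.add_apply, Pi.pow_apply]
  push_cast
  linear_combination (2 * besselJ 1 z) * hrec
end

section
/- Let 0 < k₁ < k_F, let d ∈ ℝ² be a unit vector, and let c, x ∈ ℝ² with x ≠ c. Write r = ‖x − c‖ and let α ∈ ℝ satisfy d · (c − x) = r cos α. With Λ(z) = J₀(z)² + J₁(z)², the multi-frequency integral satisfies the exact identity ∫_{k₁}^{k_F} exp(i k d · (c − x)) J₀(k r) dk = k_F Λ(k_F r) − k₁ Λ(k₁ r) + ∫_{k₁}^{k_F} ( J₁(k r)² + 2 Σ_{s=1}^{∞} i^s J₀(k r) J_s(k r) cos(s α) ) dk, where the series under the integral converges absolutely for each k. -/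
/-!
By the Jacobi–Anger expansion, `exp (i z cos α) = J₀(z) + 2 ∑_{s ≥ 1} i^s J_s(z) cos (s α)`, the
integrand on the left is `J₀(kr)²` plus the series on the right. It remains to integrate `J₀(kr)²`,
and there the Bessel relations `J₀' = -J₁` and `(z J₁)' = z J₀` give
`d/dk [k (J₀(kr)² + J₁(kr)²)] = J₀(kr)² - J₁(kr)²`.

The Jacobi–Anger expansion (`hasSum_jacobiAnger_int`) is obtained by multiplying the exponential
series of `i z e^{iα} / 2` and `i z e^{-iα} / 2` and grouping the terms `(a, b)` of the product by
the difference `a - b`; absolute convergence of the product series justifies the regrouping and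
also yields absolute convergence of the Bessel series. The Bessel relations
(`hasDerivAt_besselJ_zero`, `hasDerivAt_mul_besselJ_one`) come from termwise differentiation.
-/

open scoped Real
open RealInnerProductSpace

/-! ### The Jacobi–Anger expansion -/

/-- The bijection `(a, b) ↦ (a - b, min a b)`, which groups the terms of a double series by the
difference of their indices. -/
def diffMinEquiv : ℕ × ℕ ≃ ℤ × ℕ where
  toFun p := ((p.1 : ℤ) - p.2, min p.1 p.2)
  invFun q := (q.2 + q.1.toNat, q.2 + (-q.1).toNat)
  left_inv := by
    rintro ⟨a, b⟩
    ext <;> simp only <;> omega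
  right_inv := by
    rintro ⟨n, m⟩
    ext <;> simp only <;> omega

/-- Factorial decay of the terms of the Bessel series gives convergence at every point. -/
lemma summable_besselJ (n : ℕ) (z : ℝ) : Summable (fun m : ℕ =>
    (-1 : ℝ) ^ m / (Nat.factorial m * Nat.factorial (m + n)) * (z / 2) ^ (2 * m + n)) := by
  have h := (Real.summable_pow_div_factorial ((z / 2) ^ 2)).mul_right (|z / 2| ^ n)
  refine Summable.of_norm_bounded h fun m => ?_
  have h1 : (1 : ℝ) ≤ (m + n).factorial := by exact_mod_cast Nat.factorial_pos _
  have h0 : (0 : ℝ) < m.factorial := by exact_mod_cast Nat.factorial_pos _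
  rw [norm_mul, norm_div, norm_pow, norm_neg, norm_one, one_pow, norm_pow, Real.norm_eq_abs,
    Real.norm_eq_abs, pow_add, pow_mul, sq_abs, abs_of_pos (by positivity), ← mul_assoc]
  calc 1 / ((m.factorial : ℝ) * (m + n).factorial) * ((z / 2) ^ 2) ^ m * |z / 2| ^ n
      ≤ 1 / ((m.factorial : ℝ) * 1) * ((z / 2) ^ 2) ^ m * |z / 2| ^ n := by gcongr
    _ = _ := by ring

/-- The two-sided Jacobi–Anger expansion `exp (i z cos α) = ∑_{n ∈ ℤ} i^|n| J_|n|(z) e^{inα}`. -/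
lemma hasSum_jacobiAnger_int (z α : ℝ) :
    HasSum (fun n : ℤ => Complex.I ^ n.natAbs * (besselJ n.natAbs z : ℂ) *
      Complex.exp (n * α * Complex.I)) (Complex.exp (Complex.I * (z * Real.cos α : ℝ))) := by
  set u : ℂ := Complex.I * z / 2 * Complex.exp (α * Complex.I) with hu
  set v : ℂ := Complex.I * z / 2 * Complex.exp (-α * Complex.I) with hv
  have huv : u + v = Complex.I * (z * Real.cos α : ℝ) := by
    rw [hu, hv]
    push_cast
    rw [Complex.cos]
    ring
  have hs (w : ℂ) : Summable fun n : ℕ => ‖w ^ n / (n.factorial : ℂ)‖ :=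
    (NormedSpace.norm_expSeries_div_summable (𝔸 := ℂ) w)
  have hsum (w : ℂ) : HasSum (fun n : ℕ => w ^ n / (n.factorial : ℂ)) (Complex.exp w) := by
    rw [Complex.exp_eq_exp_ℂ]
    exact NormedSpace.expSeries_div_hasSum_exp w
  have hprod : HasSum (fun p : ℕ × ℕ =>
      u ^ p.1 / (p.1.factorial : ℂ) * (v ^ p.2 / (p.2.factorial : ℂ)))
      (Complex.exp (Complex.I * (z * Real.cos α : ℝ))) := by
    rw [← huv, Complex.exp_add]
    have hS := summable_mul_of_summable_norm (f := fun n : ℕ => u ^ n / (n.factorial : ℂ))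
      (g := fun n : ℕ => v ^ n / (n.factorial : ℂ)) (hs u) (hs v)
    exact HasSum.mul (f := fun n : ℕ => u ^ n / (n.factorial : ℂ))
      (g := fun n : ℕ => v ^ n / (n.factorial : ℂ)) (hsum u) (hsum v) hS
  rw [← diffMinEquiv.symm.hasSum_iff] at hprod
  refine hprod.prod_fiberwise fun n => ?_
  have hJ : HasSum (fun m : ℕ => (((-1 : ℝ) ^ m / (Nat.factorial m *
      Nat.factorial (m + n.natAbs)) * (z / 2) ^ (2 * m + n.natAbs) : ℝ) : ℂ))
      (besselJ n.natAbs z : ℂ) :=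
    Complex.hasSum_ofReal.2 (summable_besselJ n.natAbs z).hasSum
  have hJ' := (hJ.mul_left (Complex.I ^ n.natAbs)).mul_right (Complex.exp (n * α * Complex.I))
  refine hJ'.congr_fun fun m => ?_
  have hI : Complex.I ^ (2 * m) = (-1) ^ m := by rw [pow_mul, Complex.I_sq]
  obtain ⟨k, rfl | rfl⟩ := n.eq_nat_or_neg
  · have he : u ^ (m + k) * v ^ m =
        (Complex.I * z / 2) ^ (2 * m + k) * Complex.exp (k * α * Complex.I) := by
      rw [hu, hv, mul_pow, mul_pow, ← Complex.exp_nat_mul, ← Complex.exp_nat_mul,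
        mul_mul_mul_comm, ← Complex.exp_add, ← pow_add]
      congr 2
      · ring
      · push_cast; ring
    have e1 : diffMinEquiv.symm ((k : ℤ), m) = (m + k, m) := by
      simp [diffMinEquiv]
    simp only [Function.comp, e1, Int.natAbs_natCast, div_mul_div_comm, he]
    push_cast
    rw [mul_div_assoc Complex.I, mul_pow, pow_add Complex.I, hI]
    ring
  · have he : u ^ m * v ^ (m + k) =
        (Complex.I * z / 2) ^ (2 * m + k) * Complex.exp (-k * α * Complex.I) := by
      rw [hu, hv, mul_pow, mul_pow, ← Complex.exp_nat_mul, ← Complex.exp_nat_mul,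
        mul_mul_mul_comm, ← Complex.exp_add, ← pow_add]
      congr 2
      · ring
      · push_cast; ring
    have e1 : diffMinEquiv.symm (-(k : ℤ), m) = (m, m + k) := by
      simp [diffMinEquiv]
    simp only [Function.comp, e1, Int.natAbs_neg, Int.natAbs_natCast, div_mul_div_comm, he]
    push_cast
    rw [mul_div_assoc Complex.I, mul_pow, pow_add Complex.I, hI]
    ring

/-- The terms of the two-sided expansion at `α = 0` have norm `|J_|n|(z)|`, and summability in `ℂ`
is absolute. -/
lemma summable_abs_besselJ (z : ℝ) : Summable fun s : ℕ => |besselJ s z| := by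
  have h := (hasSum_jacobiAnger_int z 0).summable.norm.comp_injective Nat.cast_injective
  simpa [Function.comp_def] using h

/-- The one-sided Jacobi–Anger expansion, obtained by pairing the terms `n` and `-n`. -/
lemma hasSum_jacobiAnger (z α : ℝ) :
    HasSum (fun s : ℕ => 2 * (Complex.I ^ (s + 1) * (besselJ (s + 1) z : ℂ) *
      ((Real.cos (((s : ℝ) + 1) * α) : ℝ) : ℂ)))
      (Complex.exp (Complex.I * (z * Real.cos α : ℝ)) - besselJ 0 z) := by
  have h := hasSum_jacobiAnger_int z α
  have h2 := h.nat_add_neg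
  rw [← hasSum_nat_add_iff' 1] at h2
  have hval : Complex.exp (Complex.I * (z * Real.cos α : ℝ)) - besselJ 0 z =
      Complex.exp (Complex.I * (z * Real.cos α : ℝ)) +
        Complex.I ^ Int.natAbs 0 * (besselJ (Int.natAbs 0) z : ℂ) *
          Complex.exp ((0 : ℤ) * α * Complex.I) -
      ∑ i ∈ Finset.range 1, (Complex.I ^ (i : ℤ).natAbs * (besselJ (i : ℤ).natAbs z : ℂ) *
          Complex.exp ((i : ℤ) * α * Complex.I) +
        Complex.I ^ (-(i : ℤ)).natAbs * (besselJ (-(i : ℤ)).natAbs z : ℂ) *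
          Complex.exp ((-(i : ℤ) : ℤ) * α * Complex.I)) := by
    simp
  rw [hval]
  refine h2.congr_fun fun s => ?_
  push_cast
  rw [Int.natAbs_neg, show ((s : ℤ) + 1).natAbs = s + 1 by omega, Complex.cos]
  ring_nf

/-- Absolute convergence of the series in the integrand, from that of `∑ J_s(z)` and
`|cos| ≤ 1`. -/
lemma summable_norm_series (z α : ℝ) : Summable (fun s : ℕ =>
      ‖Complex.I ^ (s+1) * ((besselJ 0 z : ℝ) : ℂ) *
        ((besselJ (s+1) z : ℝ) : ℂ) * ((Real.cos (((s:ℝ)+1) * α) : ℝ) : ℂ)‖) := by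
  refine Summable.of_nonneg_of_le (fun _ => norm_nonneg _) (fun s => ?_)
    (((summable_nat_add_iff 1).2 (summable_abs_besselJ z)).mul_left |besselJ 0 z|)
  rw [norm_mul, norm_mul, norm_mul, norm_pow, Complex.norm_I, one_pow, one_mul,
    Complex.norm_real, Complex.norm_real, Complex.norm_real]
  exact mul_le_of_le_one_right (by positivity) (Real.abs_cos_le_one _)

lemma two_mul_tsum_series (z α : ℝ) : 2 * ∑' s : ℕ,
      Complex.I ^ (s+1) * ((besselJ 0 z : ℝ) : ℂ) *
        ((besselJ (s+1) z : ℝ) : ℂ) * ((Real.cos (((s:ℝ)+1) * α) : ℝ) : ℂ) =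
      Complex.exp (Complex.I * (z * Real.cos α : ℝ)) * besselJ 0 z
        - ((besselJ 0 z ^ 2 : ℝ) : ℂ) := by
  rw [← tsum_mul_left]
  refine HasSum.tsum_eq ?_
  have hval : Complex.exp (Complex.I * (z * Real.cos α : ℝ)) * besselJ 0 z
      - ((besselJ 0 z ^ 2 : ℝ) : ℂ) =
      (Complex.exp (Complex.I * (z * Real.cos α : ℝ)) - besselJ 0 z) * besselJ 0 z := by
    push_cast
    ring
  rw [hval]
  refine ((hasSum_jacobiAnger z α).mul_right (besselJ 0 z : ℂ)).congr_fun fun s => ?_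
  ring

/-! ### Derivatives of the Bessel functions -/

/-- Termwise differentiation under factorial decay of the derivatives on bounded sets. -/
lemma hasDerivAt_tsum_of_factorial {f f' : ℕ → ℝ → ℝ} (hf : ∀ m z, HasDerivAt (f m) (f' m z) z)
    (hf0 : ∀ z, Summable fun m => f m z)
    (hb : ∀ m z R, 1 ≤ R → |z| ≤ R → |f' m z| ≤ R * ((R ^ 2) ^ m / m.factorial)) (z : ℝ) :
    HasDerivAt (fun z => ∑' m, f m z) (∑' m, f' m z) z := by
  have hz : z ∈ Metric.ball (0 : ℝ) (|z| + 1) := by simp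
  have hu : Summable (fun m : ℕ => (|z| + 1) * (((|z| + 1) ^ 2) ^ m / m.factorial)) :=
    (Real.summable_pow_div_factorial _).mul_left _
  refine hasDerivAt_tsum_of_isPreconnected hu Metric.isOpen_ball
    (convex_ball (0 : ℝ) (|z| + 1)).isPreconnected (fun m y _ => hf m y) ?_ hz (hf0 z) hz
  intro m y hy
  rw [mem_ball_zero_iff, Real.norm_eq_abs] at hy
  rw [Real.norm_eq_abs]
  exact hb m y _ (by linarith [abs_nonneg z]) hy.le

lemma hasDerivAt_besselJ_zero (z : ℝ) : HasDerivAt (besselJ 0) (-besselJ 1 z) z := by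
  have key := hasDerivAt_tsum_of_factorial
    (f := fun m z => (-1 : ℝ) ^ m / (Nat.factorial m * Nat.factorial (m + 0)) *
      (z / 2) ^ (2 * m + 0))
    (f' := fun m z => (-1 : ℝ) ^ m / (Nat.factorial m * Nat.factorial m) *
      (m * (z / 2) ^ (2 * m - 1))) ?_ (summable_besselJ 0) ?_ z
  · refine HasDerivAt.congr_deriv (f := besselJ 0) key ?_
    have hs : Summable fun m : ℕ => (-1 : ℝ) ^ m / (Nat.factorial m * Nat.factorial m) *
        (m * (z / 2) ^ (2 * m - 1)) := by
      rw [← summable_nat_add_iff 1]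
      refine (summable_besselJ 1 z).neg.congr fun m => ?_
      rw [Nat.factorial_succ, show 2 * (m + 1) - 1 = 2 * m + 1 by omega]
      have h0 : (m.factorial : ℝ) ≠ 0 := by exact_mod_cast Nat.factorial_ne_zero _
      push_cast
      field_simp
      ring
    rw [hs.tsum_eq_zero_add, besselJ, ← tsum_neg]
    simp only [Nat.cast_zero, zero_mul, mul_zero, zero_add]
    refine tsum_congr fun m => ?_
    rw [Nat.factorial_succ, show 2 * (m + 1) - 1 = 2 * m + 1 by omega]
    have h0 : (m.factorial : ℝ) ≠ 0 := by exact_mod_cast Nat.factorial_ne_zero _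
    push_cast
    field_simp
    ring
  · intro m z
    have h := (((hasDerivAt_id z).div_const 2).pow (2 * m)).const_mul
      ((-1 : ℝ) ^ m / (Nat.factorial m * Nat.factorial m))
    refine h.congr_deriv ?_
    simp only [id]
    push_cast
    ring
  · intro m z R hR hz
    have hm : (m : ℝ) ≤ m.factorial := by exact_mod_cast Nat.self_le_factorial m
    have h0 : (0 : ℝ) < m.factorial := by exact_mod_cast Nat.factorial_pos _
    have hz2 : |z / 2| ≤ R := by
      rw [abs_div, abs_two]; linarith [abs_nonneg z]
    have hp : |z / 2| ^ (2 * m - 1) ≤ R * (R ^ 2) ^ m := by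
      calc |z / 2| ^ (2 * m - 1) ≤ R ^ (2 * m - 1) := by gcongr
        _ ≤ R ^ (2 * m + 1) := pow_le_pow_right₀ hR (by omega)
        _ = _ := by rw [← pow_mul, pow_succ]; ring
    rw [abs_mul, abs_div, abs_pow, abs_neg, abs_one, one_pow, abs_mul, abs_mul, abs_pow,
      Nat.abs_cast, Nat.abs_cast]
    calc 1 / ((m.factorial : ℝ) * m.factorial) * (m * |z / 2| ^ (2 * m - 1))
        ≤ 1 / ((m.factorial : ℝ) * m.factorial) * (m.factorial * (R * (R ^ 2) ^ m)) := by gcongr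
      _ = _ := by field_simp

lemma hasDerivAt_mul_besselJ_one (z : ℝ) :
    HasDerivAt (fun z => z * besselJ 1 z) (z * besselJ 0 z) z := by
  have key := hasDerivAt_tsum_of_factorial
    (f := fun m z => z * ((-1 : ℝ) ^ m / (Nat.factorial m * Nat.factorial (m + 1)) *
      (z / 2) ^ (2 * m + 1)))
    (f' := fun m z => z * ((-1 : ℝ) ^ m / (Nat.factorial m * Nat.factorial (m + 0)) *
      (z / 2) ^ (2 * m + 0))) ?_ (fun z => (summable_besselJ 1 z).mul_left z) ?_ z
  · simpa only [tsum_mul_left, besselJ] using key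
  · intro m z
    have h := (hasDerivAt_id z).mul ((((hasDerivAt_id z).div_const 2).pow (2 * m + 1)).const_mul
      ((-1 : ℝ) ^ m / (Nat.factorial m * Nat.factorial (m + 1))))
    refine h.congr_deriv ?_
    have h0 : (m.factorial : ℝ) ≠ 0 := by exact_mod_cast Nat.factorial_ne_zero _
    simp only [Nat.factorial_succ, id, Nat.add_sub_cancel, add_zero, Pi.pow_apply]
    push_cast
    field_simp
    ring
  · intro m z R hR hz
    have h1 : (1 : ℝ) ≤ m.factorial := by exact_mod_cast Nat.factorial_pos _
    have hz2 : |z / 2| ≤ R := by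
      rw [abs_div, abs_two]; linarith [abs_nonneg z]
    rw [abs_mul, abs_mul, abs_div, abs_pow, abs_neg, abs_one, one_pow, abs_mul, abs_pow,
      Nat.abs_cast, Nat.abs_cast, add_zero, add_zero, ← pow_mul]
    calc |z| * (1 / ((m.factorial : ℝ) * m.factorial) * |z / 2| ^ (2 * m))
        ≤ R * (1 / ((m.factorial : ℝ) * 1) * R ^ (2 * m)) := by gcongr
      _ = _ := by ring

lemma continuous_besselJ_zero : Continuous (besselJ 0) :=
  continuous_iff_continuousAt.2 fun z => (hasDerivAt_besselJ_zero z).continuousAt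

/-- Away from the origin, `J₁' = J₀ - J₁ / z`. -/
lemma hasDerivAt_besselJ_one {z : ℝ} (hz : z ≠ 0) :
    HasDerivAt (besselJ 1) (besselJ 0 z - besselJ 1 z / z) z := by
  have h := (hasDerivAt_mul_besselJ_one z).div (hasDerivAt_id z) hz
  have heq : besselJ 1 =ᶠ[nhds z] ((fun z => z * besselJ 1 z) / id) := by
    filter_upwards [isOpen_ne.mem_nhds hz] with y hy
    have hy' : y ≠ 0 := hy
    simp [hy']
  refine (h.congr_of_eventuallyEq heq).congr_deriv ?_
  simp only [id]
  field_simp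

lemma hasDerivAt_mul_lambda {r k : ℝ} (hr : r ≠ 0) (hk : k ≠ 0) :
    HasDerivAt (fun k => k * (besselJ 0 (k * r) ^ 2 + besselJ 1 (k * r) ^ 2))
      (besselJ 0 (k * r) ^ 2 - besselJ 1 (k * r) ^ 2) k := by
  have hl : HasDerivAt (fun k : ℝ => k * r) r k := by
    simpa using (hasDerivAt_id k).mul_const r
  have h0 := (hasDerivAt_besselJ_zero (k * r)).comp k hl
  have h1 := (hasDerivAt_besselJ_one (mul_ne_zero hk hr)).comp k hl
  refine ((hasDerivAt_id k).mul ((h0.pow 2).add (h1.pow 2))).congr_deriv ?_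
  simp only [id, Function.comp, Pi.add_apply, Pi.pow_apply]
  field_simp
  ring

/-- the multi-frequency integral satisfies
∫_{k₁}^{k_F} e^{ikd·(c−x)} J₀(kr) dk = k_F Λ(k_F r) − k₁ Λ(k₁ r)
  + ∫_{k₁}^{k_F} (J₁(kr)² + 2 Σ_{s=1}^∞ i^s J₀(kr) J_s(kr) cos(sα)) dk,
where Λ(z) = J₀(z)² + J₁(z)², r = ‖x − c‖, d·(c−x) = r cos α, and the series under the
integral converges absolutely for each k. -/
theorem multiFrequency_integral_identity (k₁ kF : ℝ) (h1 : 0 < k₁) (h2 : k₁ < kF)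
    (d c x : EuclideanSpace ℝ (Fin 2)) (hd : ‖d‖ = 1) (hx : x ≠ c)
    (r α : ℝ) (hr : r = ‖x - c‖) (hα : (⟪d, c - x⟫ : ℝ) = r * Real.cos α) :
    (∀ k : ℝ, Summable (fun s : ℕ =>
      ‖Complex.I ^ (s+1) * ((besselJ 0 (k * r) : ℝ) : ℂ) *
        ((besselJ (s+1) (k * r) : ℝ) : ℂ) * ((Real.cos (((s:ℝ)+1) * α) : ℝ) : ℂ)‖)) ∧
    (∫ k in k₁..kF,
        Complex.exp (Complex.I * k * (⟪d, c - x⟫ : ℝ)) * ((besselJ 0 (k * r) : ℝ) : ℂ))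
      = ((kF * (besselJ 0 (kF * r) ^ 2 + besselJ 1 (kF * r) ^ 2) : ℝ) : ℂ)
        - ((k₁ * (besselJ 0 (k₁ * r) ^ 2 + besselJ 1 (k₁ * r) ^ 2) : ℝ) : ℂ)
        + ∫ k in k₁..kF,
            (((besselJ 1 (k * r) ^ 2 : ℝ) : ℂ)
              + 2 * ∑' s : ℕ,
                  Complex.I ^ (s+1) * ((besselJ 0 (k * r) : ℝ) : ℂ) *
                    ((besselJ (s+1) (k * r) : ℝ) : ℂ) *
                    ((Real.cos (((s:ℝ)+1) * α) : ℝ) : ℂ)) := by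
  refine ⟨fun k => summable_norm_series (k * r) α, ?_⟩
  have hr0 : r ≠ 0 := by
    rw [hr]
    exact norm_ne_zero_iff.2 (sub_ne_zero.2 hx)
  have hpos : ∀ k ∈ Set.uIcc k₁ kF, k ≠ 0 := by
    intro k hk
    rw [Set.uIcc_of_le h2.le] at hk
    exact (h1.trans_le hk.1).ne'
  have hc0 : Continuous fun k : ℝ => besselJ 0 (k * r) :=
    continuous_besselJ_zero.comp (continuous_id.mul continuous_const)
  have hc1 : ContinuousOn (fun k : ℝ => besselJ 1 (k * r)) (Set.uIcc k₁ kF) := fun k hk =>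
    (ContinuousAt.comp (f := fun k : ℝ => k * r)
      (hasDerivAt_besselJ_one (mul_ne_zero (hpos k hk) hr0)).continuousAt
      (by fun_prop)).continuousWithinAt
  have hi0 : IntervalIntegrable (fun k : ℝ => besselJ 0 (k * r) ^ 2) MeasureTheory.volume k₁ kF :=
    (hc0.pow 2).intervalIntegrable _ _
  have hi1 : IntervalIntegrable (fun k : ℝ => besselJ 1 (k * r) ^ 2) MeasureTheory.volume k₁ kF :=
    (hc1.pow 2).intervalIntegrable
  have hFTC : ∫ k in k₁..kF, (besselJ 0 (k * r) ^ 2 - besselJ 1 (k * r) ^ 2) =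
      kF * (besselJ 0 (kF * r) ^ 2 + besselJ 1 (kF * r) ^ 2) -
        k₁ * (besselJ 0 (k₁ * r) ^ 2 + besselJ 1 (k₁ * r) ^ 2) :=
    intervalIntegral.integral_eq_sub_of_hasDerivAt
      (fun k hk => hasDerivAt_mul_lambda hr0 (hpos k hk)) (hi0.sub hi1)
  have hiE : IntervalIntegrable (fun k : ℝ => Complex.exp (Complex.I * k * (⟪d, c - x⟫ : ℝ)) *
      ((besselJ 0 (k * r) : ℝ) : ℂ)) MeasureTheory.volume k₁ kF := by
    refine Continuous.intervalIntegrable ?_ _ _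
    fun_prop
  have hiD : IntervalIntegrable (fun k : ℝ =>
      ((besselJ 0 (k * r) ^ 2 - besselJ 1 (k * r) ^ 2 : ℝ) : ℂ)) MeasureTheory.volume k₁ kF :=
    ⟨(hi0.sub hi1).1.ofReal, (hi0.sub hi1).2.ofReal⟩
  rw [← Complex.ofReal_sub, ← hFTC, ← intervalIntegral.integral_ofReal, ← sub_eq_iff_eq_add',
    ← intervalIntegral.integral_sub hiE hiD]
  refine intervalIntegral.integral_congr fun k _ => ?_
  beta_reduce
  rw [two_mul_tsum_series, hα]
  push_cast
  ring_nf
end
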